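/- arXiv:1401.6843 — 2 statements merged into one kernel-verified Lean document; each statement's English description precedes it below -/
import Mathlib

section
/- For every 1 ≤ i ≤ n²/2, j ∈ {0,1} and 0 ≤ h ≤ n²−2i, the map x ↦ x·E^h is injective on P_{2i,j}, and hence defines an isomorphism of left u-modules from P_{2i,j} onto the left ideal P_{2i,j}E^h := {x·E^h : x ∈ P_{2i,j}}. -/
noncomputable section

open scoped TensorProduct

namespace QFL

/-- The defining relations of the quasi-Frobenius-Lusztig kernel `ũ_q(sl₂)`,
on the free algebra on four generators `K = ι 0`, `K̂ = ι 1`, `E = ι 2`, `F = ι 3`. -/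
inductive Rel (k : Type) [Field k] (n : ℕ) (q : k) :
    FreeAlgebra k (Fin 4) → FreeAlgebra k (Fin 4) → Prop
  | Kord : Rel k n q (FreeAlgebra.ι k (0 : Fin 4) ^ n) 1
  | Khord : Rel k n q (FreeAlgebra.ι k (1 : Fin 4) ^ n)
      ((FreeAlgebra.ι k (0 : Fin 4) ^ (n - 1)) ^ 2)
  | KKh : Rel k n q (FreeAlgebra.ι k (0 : Fin 4) * FreeAlgebra.ι k (1 : Fin 4))
      (FreeAlgebra.ι k (1 : Fin 4) * FreeAlgebra.ι k (0 : Fin 4))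
  | KE : Rel k n q
      (FreeAlgebra.ι k (0 : Fin 4) * FreeAlgebra.ι k (2 : Fin 4) *
        FreeAlgebra.ι k (0 : Fin 4) ^ (n - 1))
      (q ^ n • FreeAlgebra.ι k (2 : Fin 4))
  | KF : Rel k n q
      (FreeAlgebra.ι k (0 : Fin 4) * FreeAlgebra.ι k (3 : Fin 4) *
        FreeAlgebra.ι k (0 : Fin 4) ^ (n - 1))
      ((q ^ n)⁻¹ • FreeAlgebra.ι k (3 : Fin 4))
  | KhE : Rel k n q
      (FreeAlgebra.ι k (1 : Fin 4) * FreeAlgebra.ι k (2 : Fin 4) *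
        FreeAlgebra.ι k (1 : Fin 4) ^ (n ^ 2 - 1))
      ((q ^ n * (q ^ 2)⁻¹) • FreeAlgebra.ι k (2 : Fin 4))
  | KhF : Rel k n q
      (FreeAlgebra.ι k (1 : Fin 4) * FreeAlgebra.ι k (3 : Fin 4) *
        FreeAlgebra.ι k (1 : Fin 4) ^ (n ^ 2 - 1))
      (((q ^ n)⁻¹ * q ^ 2) • FreeAlgebra.ι k (3 : Fin 4))
  | Enil : Rel k n q (FreeAlgebra.ι k (2 : Fin 4) ^ n ^ 2) 0
  | Fnil : Rel k n q (FreeAlgebra.ι k (3 : Fin 4) ^ n ^ 2) 0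
  | EF : Rel k n q
      (FreeAlgebra.ι k (3 : Fin 4) * FreeAlgebra.ι k (2 : Fin 4) -
        q⁻¹ • (FreeAlgebra.ι k (2 : Fin 4) * FreeAlgebra.ι k (3 : Fin 4)))
      (1 - FreeAlgebra.ι k (0 : Fin 4) ^ (n - 1) * FreeAlgebra.ι k (1 : Fin 4))

/-- The algebra `ũ_q(sl₂)` as the quotient of the free algebra by the defining relations. -/
abbrev U (k : Type) [Field k] (n : ℕ) (q : k) := RingQuot (Rel k n q)

variable (k : Type) [Field k] (n : ℕ) (q : k)

def K : U k n q := RingQuot.mkAlgHom k (Rel k n q) (FreeAlgebra.ι k (0 : Fin 4))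
def Kh : U k n q := RingQuot.mkAlgHom k (Rel k n q) (FreeAlgebra.ι k (1 : Fin 4))
def E : U k n q := RingQuot.mkAlgHom k (Rel k n q) (FreeAlgebra.ι k (2 : Fin 4))
def F : U k n q := RingQuot.mkAlgHom k (Rel k n q) (FreeAlgebra.ι k (3 : Fin 4))

/-- `K⁻¹ = K^(n-1)`. -/
def Kinv : U k n q := K k n q ^ (n - 1)
/-- `K̂⁻¹ = K̂^(n²-1)`. -/
def Khinv : U k n q := Kh k n q ^ (n ^ 2 - 1)

/-- `φ_{2i} = (2/n²) Σ_{t<n²/2} q^{-2it} (K⁻¹K̂)^t`. -/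
def phi (i : ℕ) : U k n q :=
  ((n ^ 2 : k)⁻¹ * 2) • ∑ t ∈ Finset.range (n ^ 2 / 2),
    (q⁻¹ ^ (2 * i * t)) • (Kinv k n q * Kh k n q) ^ t

/-- `𝟙₀ = (1/2)(1 + KK̂^(n/2))` and `𝟙₁ = (1/2)(1 - KK̂^(n/2))`. -/
def oneJ (j : ℕ) : U k n q :=
  if j = 0 then (2 : k)⁻¹ • (1 + K k n q * Kh k n q ^ (n / 2))
  else (2 : k)⁻¹ • (1 - K k n q * Kh k n q ^ (n / 2))

/-- The idempotent `e_{2i,j} = φ_{2i} 𝟙_j`. -/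
def eIdem (i j : ℕ) : U k n q := phi k n q i * oneJ k n q j

/-- `α_{2i,j} = F^(n²-1) e_{2i,j}`. -/
def alpha (i j : ℕ) : U k n q := F k n q ^ (n ^ 2 - 1) * eIdem k n q i j

/-- `β_{2i,j} = E^(2i-2) α_{2i,j}`. -/
def beta (i j : ℕ) : U k n q := E k n q ^ (2 * i - 2) * alpha k n q i j

/-- The Gaussian number `s_q = 1 + q + ⋯ + q^(s-1)`. -/
def gauss (x : k) (s : ℕ) : k := ∑ t ∈ Finset.range s, x ^ t

/-- The span of the PBW-type monomials `F^a K^c K̂^d E^b` with `a ≤ n²-2`, `b ≤ n²-1`,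
`c ≤ n-1`, `d ≤ n²-1`. -/
def pbw : Submodule k (U k n q) :=
  Submodule.span k {x | ∃ a b c d : ℕ, a ≤ n ^ 2 - 2 ∧ b ≤ n ^ 2 - 1 ∧ c ≤ n - 1 ∧
    d ≤ n ^ 2 - 1 ∧ x = F k n q ^ a * K k n q ^ c * Kh k n q ^ d * E k n q ^ b}

/-- `γ_{2i,j}`: the unique element of the PBW span with `F·γ = β_{2i,j}`. -/
def gam (i j : ℕ) : U k n q :=
  @dite _ (∃! x, x ∈ pbw k n q ∧ F k n q * x = beta k n q i j)
    (Classical.propDecidable _) (fun h => h.choose) (fun _ => 0)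

/-- The left ideal `P_{2i,j} = u·γ_{2i,j}`. -/
def P (i j : ℕ) : Submodule (U k n q) (U k n q) :=
  Submodule.span (U k n q) {gam k n q i j}

/-- `S_{2i,j} = Soc(P_{2i,j})`, the sum of all simple submodules of `P_{2i,j}`. -/
def S (i j : ℕ) : Submodule (U k n q) (U k n q) :=
  sSup {N : Submodule (U k n q) (U k n q) | N ≤ P k n q i j ∧ IsSimpleModule (U k n q) N}

end QFL

namespace QFLaux

/-- The relations, abstractly. -/
structure Rels {k A : Type} [Field k] [Ring A] [Algebra k A] (n : ℕ) (q : k) (K H E F : A) :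
    Prop where
  Kn : K ^ n = 1
  Hn : H ^ n = (K ^ (n - 1)) ^ 2
  KH : K * H = H * K
  KE : K * E = q ^ n • (E * K)
  KF : K * F = (q ^ n)⁻¹ • (F * K)
  HE : H * E = (q ^ n * (q ^ 2)⁻¹) • (E * H)
  HF : H * F = ((q ^ n)⁻¹ * q ^ 2) • (F * H)
  En : E ^ n ^ 2 = 0
  Fn : F ^ n ^ 2 = 0
  FE : F * E = q⁻¹ • (E * F) + 1 - K ^ (n - 1) * H

section core
variable {k A : Type} [Field k] [Ring A] [Algebra k A] (q : k) (L E F : A)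

/-- Casimir-like element. -/
def D : A := (1 - q) • (E * F) + q • (1 : A) + q ^ 2 • L

/-- linear factor -/
def fac (u : k) : A := u • D q L E F - q • (1 : A) - (q ^ 2 * u ^ 2) • L

/-- products of linear factors -/
def G (a : k) : ℕ → A
  | 0 => 1
  | p + 1 => G a p * fac q L E F (a * q ^ p)

variable {q L E F}
variable (hq0 : q ≠ 0) (hLE : L * E = (q⁻¹ ^ 2) • (E * L)) (hLF : L * F = q ^ 2 • (F * L))
  (hFE : F * E = q⁻¹ • (E * F) + 1 - L)

include hq0 hLE hLF in
theorem D_comm_L : Commute (D q L E F) L := by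
  have h : Commute (E * F) L := by
    show E * F * L = L * (E * F)
    rw [← mul_assoc, hLE, smul_mul_assoc, mul_assoc, mul_assoc, hLF, mul_smul_comm, smul_smul]
    rw [← mul_pow, inv_mul_cancel₀ hq0, one_pow, one_smul]
  unfold D
  exact (((h.smul_left _).add_left ((Commute.one_left L).smul_left _)).add_left
    ((Commute.refl L).smul_left _))

include hq0 hLF hFE in
theorem D_F : D q L E F * F = q • (F * D q L E F) := by
  have h : F * (E * F) = q⁻¹ • (E * F * F) + F - L * F := by
    rw [← mul_assoc, hFE, sub_mul, add_mul, smul_mul_assoc, one_mul]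
  unfold D
  simp only [add_mul, mul_add, smul_mul_assoc, mul_smul_comm, one_mul, mul_one, h, hLF]
  match_scalars <;> field_simp <;> ring

include hq0 hLE hFE in
theorem E_D : E * D q L E F = q • (D q L E F * E) := by
  have h : E * F * E = q⁻¹ • (E * (E * F)) + E - E * L := by
    rw [mul_assoc, hFE, mul_sub, mul_add, mul_smul_comm, mul_one]
  unfold D
  simp only [add_mul, mul_add, smul_mul_assoc, mul_smul_comm, one_mul, mul_one, h, hLE]
  match_scalars <;> field_simp <;> ring

include hq0 hLF hFE in
theorem fac_F (u : k) : fac q L E F u * F = F * fac q L E F (u * q) := by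
  unfold fac
  simp only [sub_mul, mul_sub, smul_mul_assoc, mul_smul_comm, one_mul, mul_one,
    D_F hq0 hLF hFE, hLF]
  match_scalars <;> ring

include hq0 hLE hFE in
theorem E_fac (u : k) : E * fac q L E F u = fac q L E F (u * q) * E := by
  unfold fac
  simp only [sub_mul, mul_sub, smul_mul_assoc, mul_smul_comm, one_mul, mul_one,
    E_D hq0 hLE hFE, hLE]
  match_scalars <;> field_simp

theorem fac_one : fac q L E F 1 = (1 - q) • (E * F) := by
  unfold fac D
  match_scalars <;> ring

include hq0 hFE in
theorem fac_inv : fac q L E F q⁻¹ = (1 - q) • (F * E) := by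
  unfold fac D
  rw [hFE]
  match_scalars <;> field_simp <;> ring

include hq0 hLE hLF in
theorem fac_comm_D (u : k) : Commute (fac q L E F u) (D q L E F) := by
  unfold fac
  exact ((((Commute.refl _).smul_left _).sub_left ((Commute.one_left _).smul_left _)).sub_left
    ((D_comm_L hq0 hLE hLF).symm.smul_left _))

include hq0 hLE hLF in
theorem fac_comm_L (u : k) : Commute (fac q L E F u) L := by
  unfold fac
  exact ((((D_comm_L hq0 hLE hLF)).smul_left _).sub_left
    ((Commute.one_left _).smul_left _)).sub_left ((Commute.refl L).smul_left _)

theorem comm_fac {w : A} (h1 : Commute w (D q L E F)) (h2 : Commute w L) (u : k) :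
    Commute w (fac q L E F u) := by
  unfold fac
  exact ((h1.smul_right _).sub_right ((Commute.one_right _).smul_right _)).sub_right
    (h2.smul_right _)

theorem comm_G {w : A} (h1 : Commute w (D q L E F)) (h2 : Commute w L) (a : k) (p : ℕ) :
    Commute w (G q L E F a p) := by
  induction p with
  | zero => exact Commute.one_right _
  | succ p ih => exact ih.mul_right (comm_fac h1 h2 _)

theorem G_succ' (a : k) (p : ℕ) :
    G q L E F a (p + 1) = fac q L E F a * G q L E F (a * q) p := by
  induction p with
  | zero => simp [G]
  | succ p ih =>
    rw [G, ih, G, mul_assoc, pow_succ', mul_assoc a q]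

include hq0 hLF hFE in
theorem G_F (a : k) (p : ℕ) : G q L E F a p * F = F * G q L E F (a * q) p := by
  induction p with
  | zero => simp [G]
  | succ p ih =>
    rw [G, G, mul_assoc, fac_F hq0 hLF hFE, ← mul_assoc, ih, mul_assoc]
    congr 3; ring

include hq0 hLF hFE in
theorem G_Fpow (a : k) (p r : ℕ) :
    G q L E F a p * F ^ r = F ^ r * G q L E F (a * q ^ r) p := by
  induction r with
  | zero => simp
  | succ r ih =>
    rw [pow_succ, ← mul_assoc, ih, mul_assoc, G_F hq0 hLF hFE, ← mul_assoc, pow_succ q,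
      mul_assoc a]

include hq0 hLE hFE in
theorem E_G (a : k) (p : ℕ) : E * G q L E F a p = G q L E F (a * q) p * E := by
  induction p with
  | zero => simp [G]
  | succ p ih =>
    rw [G, G, ← mul_assoc, ih, mul_assoc, E_fac hq0 hLE hFE, ← mul_assoc]
    congr 3; ring

include hq0 hLE hLF hFE in
theorem EpFp (p : ℕ) : (1 - q) ^ p • (E ^ p * F ^ p) = G q L E F 1 p := by
  induction p with
  | zero => simp [G]
  | succ p ih =>
    have : E ^ (p + 1) * F ^ (p + 1) = E * (E ^ p * F ^ p) * F := by
      rw [pow_succ', pow_succ]; simp only [mul_assoc]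
    rw [this, pow_succ', mul_smul, ← smul_mul_assoc, ← mul_smul_comm ((1 - q) ^ p), ih,
      E_G hq0 hLE hFE, mul_assoc, ← mul_smul_comm, ← fac_one (L := L), G_succ']
    exact (comm_G (fac_comm_D hq0 hLE hLF 1) (fac_comm_L hq0 hLE hLF 1) _ _).eq.symm

include hq0 hLF hFE in
theorem FpEp (p : ℕ) : (1 - q) ^ p • (F ^ p * E ^ p) = G q L E F (q⁻¹ ^ p) p := by
  induction p with
  | zero => simp [G]
  | succ p ih =>
    have h : F ^ (p + 1) * E ^ (p + 1) = F * (F ^ p * E ^ p) * E := by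
      rw [pow_succ', pow_succ]; simp only [mul_assoc]
    have h2 : q⁻¹ ^ (p + 1) * q = q⁻¹ ^ p := by
      rw [pow_succ, mul_assoc, inv_mul_cancel₀ hq0, mul_one]
    have h3 := G_F hq0 hLF hFE (q⁻¹ ^ (p + 1)) p
    rw [h2] at h3
    rw [h, pow_succ', mul_smul, ← smul_mul_assoc ((1 - q) ^ p), ← mul_smul_comm ((1 - q) ^ p), ih,
      ← h3, mul_assoc, ← mul_smul_comm, ← fac_inv (L := L) hq0 hFE, G]
    congr 2
    rw [pow_succ', mul_assoc, ← mul_pow, inv_mul_cancel₀ hq0, one_pow, mul_one]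

variable {N m r : ℕ} (hq : IsPrimitiveRoot q N) (hN : m + r + 2 = N) (hFN : F ^ N = 0)
  {e : A} (heD : Commute e (D q L E F)) (heL : Commute e L) (heL' : e * L = q ^ (m + 2) • e)

include heL' in
theorem e_fac (u c : k) (hc : u * c = q + q ^ 2 * u ^ 2 * q ^ (m + 2)) :
    e * fac q L E F u = e * (u • (D q L E F - c • (1 : A))) := by
  unfold fac
  simp only [mul_sub, mul_smul_comm, heL', smul_sub, smul_smul, hc, mul_one]
  rw [add_smul, sub_sub]

variable (q L E F m r e) in
/-- explicit gamma -/
def gamE : A := (1 - q)⁻¹ ^ m • (G q L E F q m * F ^ r * e)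

include hq0 hLE hLF hFE in
theorem F_gamE (hq1 : 1 - q ≠ 0) : F * gamE q L E F m r e = E ^ m * (F ^ (m + r + 1) * e) := by
  have h := G_F (a := 1) (p := m) hq0 hLF hFE
  rw [one_mul] at h
  unfold gamE
  rw [mul_smul_comm, ← mul_assoc, ← mul_assoc, ← h, ← EpFp hq0 hLE hLF hFE]
  simp only [smul_mul_assoc, smul_smul]
  rw [← mul_pow, inv_mul_cancel₀ hq1, one_pow, one_smul,
    show m + r + 1 = m + 1 + r by ring, pow_add, pow_succ]
  simp only [mul_assoc]

include hq0 hLE hLF hFE hq hN hFN heD heL heL' in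
theorem gam_ann : gamE q L E F m r e * (D q L E F - (q ^ 2 + q ^ (m + 3)) • (1 : A)) *
    (D q L E F - (q ^ 2 + q ^ (m + 3)) • (1 : A)) = 0 := by
  set X := D q L E F - (q ^ 2 + q ^ (m + 3)) • (1 : A) with hX
  have hqN : q ^ r * q ^ (m + 2) = 1 := by
    rw [← pow_add, show r + (m + 2) = N by omega, hq.pow_eq_one]
  have hqr : q ^ r = q⁻¹ ^ (m + 2) := by
    rw [inv_pow]; exact eq_inv_of_mul_eq_one_left hqN
  have h0 : F ^ r * G q L E F (q ^ r) (m + 2) = 0 := by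
    rw [hqr, ← FpEp hq0 hLF hFE, mul_smul_comm, ← mul_assoc, ← pow_add,
      show r + (m + 2) = N by omega, hFN, zero_mul, smul_zero]
  have hXe : Commute e X := heD.sub_right ((Commute.one_right _).smul_right _)
  have e1 : e * fac q L E F (q ^ r) = q ^ r • (e * X) := by
    rw [e_fac heL' (q ^ r) (q ^ 2 + q ^ (m + 3)), mul_smul_comm]
    linear_combination (q - q ^ 2 * q ^ r) * hqN
  have e2 : e * fac q L E F (q ^ r * q * q ^ m) = (q ^ r * q * q ^ m) • (e * X) := by
    rw [e_fac heL' _ (q ^ 2 + q ^ (m + 3)), mul_smul_comm]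
    linear_combination (q - (q ^ r * q * q ^ m) * q ^ (m + 3)) * hqN
  have h1 : F ^ r * G q L E F (q ^ r) (m + 2) * e =
      (q ^ r * (q ^ r * q * q ^ m)) • (F ^ r * G q L E F (q ^ r * q) m * e * X * X) := by
    rw [G_succ', G]
    have c1 := comm_fac heD heL (q ^ r)
    have c2 := comm_fac heD heL (q ^ r * q * q ^ m)
    have c3 := comm_G (fac_comm_D hq0 hLE hLF (q ^ r)) (fac_comm_L hq0 hLE hLF (q ^ r))
      (q ^ r * q) m
    have c4 := comm_fac (fac_comm_D hq0 hLE hLF (q ^ r)) (fac_comm_L hq0 hLE hLF (q ^ r))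
      (q ^ r * q * q ^ m)
    have cX : Commute X (fac q L E F (q ^ r)) :=
      ((fac_comm_D hq0 hLE hLF (q ^ r)).symm).sub_left ((Commute.one_left _).smul_left _)
    calc _ = F ^ r * ((fac q L E F (q ^ r) * G q L E F (q ^ r * q) m) *
          (fac q L E F (q ^ r * q * q ^ m) * e)) := by simp only [mul_assoc]
      _ = F ^ r * (G q L E F (q ^ r * q) m *
          (fac q L E F (q ^ r) * (e * fac q L E F (q ^ r * q * q ^ m)))) := by
            rw [c3.eq, ← c2.eq]; simp only [mul_assoc]
      _ = F ^ r * (G q L E F (q ^ r * q) m *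
          ((e * fac q L E F (q ^ r)) * ((q ^ r * q * q ^ m) • X))) := by
            rw [e2, c1.eq]; simp only [mul_assoc, mul_smul_comm]
      _ = _ := by
            rw [e1]; simp only [mul_assoc, mul_smul_comm, smul_mul_assoc, smul_smul]
            congr 1; ring
  rw [h0, zero_mul] at h1
  have h2 := (smul_eq_zero.mp h1.symm).resolve_left (by simp [hq0])
  unfold gamE
  rw [G_Fpow hq0 hLF hFE, mul_comm q, smul_mul_assoc, smul_mul_assoc, h2, smul_zero]

include hq0 hLE hLF hFE hq hN hFN heD heL heL' in
theorem key (h : ℕ) (hh : h ≤ r) : ∃ w, Commute w (D q L E F) ∧ Commute w L ∧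
    gamE q L E F m r e * G q L E F 1 h * w = gamE q L E F m r e := by
  induction h with
  | zero => exact ⟨1, Commute.one_left _, Commute.one_left _, by simp [G]⟩
  | succ h ih =>
    obtain ⟨w, w1, w2, w3⟩ := ih (by omega)
    have hann := gam_ann hq0 hLE hLF hFE hq hN hFN heD heL heL'
    set X := D q L E F - (q ^ 2 + q ^ (m + 3)) • (1 : A) with hX
    set g := gamE q L E F m r e with hg
    set d : k := (1 - q ^ (h + 1)) * (q * (q ^ (h + m + 2) - 1)) with hd
    have hd0 : d ≠ 0 := by
      refine mul_ne_zero ?_ (mul_ne_zero hq0 ?_)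
      · rw [sub_ne_zero]
        exact (hq.pow_ne_one_of_pos_of_lt (by omega) (by omega)).symm
      · rw [sub_ne_zero]
        exact hq.pow_ne_one_of_pos_of_lt (by omega) (by omega)
    have hgL : g * L = q ^ (m + 2) • g := by
      rw [hg, gamE, smul_mul_assoc, mul_assoc, heL', mul_smul_comm, smul_comm]
    have hgf : g * fac q L E F (q ^ h) = q ^ h • (g * X) + d • g := by
      rw [hX]
      unfold fac
      simp only [mul_sub, mul_smul_comm, hgL, mul_one]
      rw [hd]
      match_scalars <;> ring
    have XD : Commute X (D q L E F) := (Commute.refl _).sub_left ((Commute.one_left _).smul_left _)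
    have XL : Commute X L :=
      (D_comm_L hq0 hLE hLF).sub_left ((Commute.one_left _).smul_left _)
    refine ⟨w * ((d⁻¹ ^ 2) • (d • (1 : A) - q ^ h • X)), ?_, ?_, ?_⟩
    · exact w1.mul_left ((((Commute.one_left _).smul_left _).sub_left (XD.smul_left _)).smul_left _)
    · exact w2.mul_left ((((Commute.one_left _).smul_left _).sub_left (XL.smul_left _)).smul_left _)
    · have c := comm_fac w1 w2 (q ^ h)
      rw [G, one_mul, ← mul_assoc, ← mul_assoc, mul_assoc (g * _), ← c.eq, ← mul_assoc, w3, hgf]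
      simp only [add_mul, mul_sub, mul_smul_comm, smul_mul_assoc, mul_one, hann]
      match_scalars <;> field_simp <;> ring

include hq0 hLE hLF hFE hq hN hFN heD heL heL' in
theorem main (h : ℕ) (hh : h ≤ r) : ∃ z, gamE q L E F m r e * E ^ h * z = gamE q L E F m r e := by
  obtain ⟨w, -, -, hw⟩ := key hq0 hLE hLF hFE hq hN hFN heD heL heL' h hh
  refine ⟨(1 - q) ^ h • (F ^ h * w), ?_⟩
  rw [← EpFp hq0 hLE hLF hFE] at hw
  simpa only [mul_smul_comm, smul_mul_assoc, mul_assoc] using hw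

end core

section rels
variable {k A : Type} [Field k] [Ring A] [Algebra k A] {n : ℕ} {q : k} {K H E F : A}

theorem pow_swap {x y : A} {s : k} (h : x * y = s • (y * x)) (a : ℕ) :
    x * y ^ a = s ^ a • (y ^ a * x) := by
  induction a with
  | zero => simp
  | succ a ih =>
    rw [pow_succ, ← mul_assoc, ih, smul_mul_assoc, mul_assoc, h, mul_smul_comm, smul_smul,
      pow_succ, mul_assoc]

theorem pow_swap' {x y : A} {s : k} (h : x * y = s • (y * x)) (a : ℕ) :
    x ^ a * y = s ^ a • (y * x ^ a) := by
  induction a with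
  | zero => simp
  | succ a ih =>
    rw [pow_succ', mul_assoc, ih, mul_smul_comm, ← mul_assoc, h, smul_mul_assoc, smul_smul,
      pow_succ, mul_assoc]

theorem LE_of (R : Rels n q K H E F) (hn : 0 < n) (hq0 : q ≠ 0) (hqn : q ^ n ^ 2 = 1) :
    (K ^ (n - 1) * H) * E = (q⁻¹ ^ 2) • (E * (K ^ (n - 1) * H)) := by
  rw [mul_assoc, R.HE, mul_smul_comm, ← mul_assoc, pow_swap' R.KE, smul_mul_assoc, smul_smul,
    mul_assoc E]
  congr 1
  obtain ⟨p, rfl⟩ : ∃ p, n = p + 1 := ⟨n - 1, by omega⟩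
  rw [Nat.add_sub_cancel]
  have : q ^ (p + 1) * (q ^ (p + 1)) ^ p = 1 := by
    rw [← pow_succ', ← pow_mul, ← sq, hqn]
  rw [inv_pow]
  linear_combination (q ^ 2)⁻¹ * this

theorem LF_of (R : Rels n q K H E F) (hn : 0 < n) (hq0 : q ≠ 0) (hqn : q ^ n ^ 2 = 1) :
    (K ^ (n - 1) * H) * F = (q ^ 2) • (F * (K ^ (n - 1) * H)) := by
  rw [mul_assoc, R.HF, mul_smul_comm, ← mul_assoc, pow_swap' R.KF, smul_mul_assoc, smul_smul,
    mul_assoc F]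
  congr 1
  obtain ⟨p, rfl⟩ : ∃ p, n = p + 1 := ⟨n - 1, by omega⟩
  rw [Nat.add_sub_cancel]
  have : (q ^ (p + 1))⁻¹ * ((q ^ (p + 1))⁻¹) ^ p = 1 := by
    rw [← pow_succ', inv_pow, ← pow_mul, ← sq, hqn, inv_one]
  linear_combination (q ^ 2) * this

theorem K_EF (R : Rels n q K H E F) (hq0 : q ≠ 0) : Commute K (E * F) := by
  show K * (E * F) = E * F * K
  rw [← mul_assoc, R.KE, smul_mul_assoc, mul_assoc, R.KF, mul_smul_comm, smul_smul,
    mul_inv_cancel₀ (pow_ne_zero _ hq0), one_smul, mul_assoc]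

theorem H_EF (R : Rels n q K H E F) (hq0 : q ≠ 0) : Commute H (E * F) := by
  show H * (E * F) = E * F * H
  rw [← mul_assoc, R.HE, smul_mul_assoc, mul_assoc, R.HF, mul_smul_comm, smul_smul]
  rw [show q ^ n * (q ^ 2)⁻¹ * ((q ^ n)⁻¹ * q ^ 2) = 1 by field_simp, one_smul, mul_assoc]

theorem comm_D' {L w : A} (h : Commute w (E * F)) (h2 : Commute w L) :
    Commute w (D q L E F) := by
  unfold D
  exact ((h.smul_right _).add_right ((Commute.one_right _).smul_right _)).add_right
    (h2.smul_right _)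

theorem L_pow (R : Rels n q K H E F) (h2 : 2 ∣ n) :
    (K ^ (n - 1) * H) ^ (n ^ 2 / 2) = 1 := by
  obtain ⟨p, rfl⟩ := h2
  have c : Commute (K ^ (2 * p - 1)) H := (show Commute K H from R.KH).pow_left _
  have e : (2 * p) ^ 2 / 2 = (2 * p) * p := by
    rw [show (2 * p) ^ 2 = 2 * p * p * 2 by ring, Nat.mul_div_cancel _ two_pos]
  rw [e, pow_mul, c.mul_pow, R.Hn, ← pow_mul, ← pow_mul, mul_comm _ (2 * p), pow_mul K, R.Kn,
    one_pow, one_mul, ← pow_mul, show (2 * p - 1) * 2 * p = 2 * p * (2 * p - 1) by ring,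
    pow_mul, R.Kn, one_pow]

theorem sum_L (L : A) (μ : k) (M : ℕ) (hμ0 : μ ≠ 0) (hμ : μ ^ M = 1) (hL : L ^ M = 1) :
    (∑ t ∈ Finset.range M, μ⁻¹ ^ t • L ^ t) * L =
      μ • ∑ t ∈ Finset.range M, μ⁻¹ ^ t • L ^ t := by
  have h := geom_sum_mul (μ⁻¹ • L) M
  simp only [smul_pow] at h
  rw [hL, inv_pow, hμ, inv_one, one_smul, sub_self, mul_sub, mul_one, sub_eq_zero,
    mul_smul_comm] at h
  conv_rhs => rw [← h]
  rw [smul_smul, mul_inv_cancel₀ hμ0, one_smul]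

variable (k K H E F) in
/-- filtered PBW span -/
def V (d : ℕ) : Submodule k A :=
  Submodule.span k {x | ∃ a b c f : ℕ, a ≤ d ∧ x = F ^ a * K ^ c * H ^ f * E ^ b}

theorem V_mono {d d' : ℕ} (h : d ≤ d') : V k K H E F d ≤ V k K H E F d' := by
  apply Submodule.span_mono
  rintro x ⟨a, b, c, f, ha, rfl⟩
  exact ⟨a, b, c, f, ha.trans h, rfl⟩

theorem V_mul {y : A} {d d' : ℕ}
    (h : ∀ a b c f : ℕ, a ≤ d → y * (F ^ a * K ^ c * H ^ f * E ^ b) ∈ V k K H E F d')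
    {x : A} (hx : x ∈ V k K H E F d) : y * x ∈ V k K H E F d' := by
  unfold V at hx
  induction hx using Submodule.span_induction with
  | mem x hx => obtain ⟨a, b, c, f, ha, rfl⟩ := hx; exact h a b c f ha
  | zero => rw [mul_zero]; exact Submodule.zero_mem _
  | add x y _ _ hx hy => rw [mul_add]; exact Submodule.add_mem _ hx hy
  | smul s x _ hx => rw [mul_smul_comm]; exact Submodule.smul_mem _ _ hx

theorem V_F {d : ℕ} {x : A} (hx : x ∈ V k K H E F d) : F * x ∈ V k K H E F (d + 1) := by
  refine V_mul (fun a b c f ha => ?_) hx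
  refine Submodule.subset_span ⟨a + 1, b, c, f, by omega, ?_⟩
  simp only [pow_succ', mul_assoc]

theorem V_K (R : Rels n q K H E F) {d : ℕ} {x : A} (hx : x ∈ V k K H E F d) :
    K * x ∈ V k K H E F d := by
  refine V_mul (fun a b c f ha => ?_) hx
  simp only [← mul_assoc]
  rw [pow_swap R.KF]
  simp only [smul_mul_assoc]
  refine Submodule.smul_mem _ _ (Submodule.subset_span ⟨a, b, c + 1, f, ha, ?_⟩)
  simp only [pow_succ', mul_assoc]

theorem V_H (R : Rels n q K H E F) {d : ℕ} {x : A} (hx : x ∈ V k K H E F d) :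
    H * x ∈ V k K H E F d := by
  refine V_mul (fun a b c f ha => ?_) hx
  simp only [← mul_assoc]
  rw [pow_swap R.HF]
  simp only [smul_mul_assoc]
  have c1 : H * K ^ c = K ^ c * H := ((show Commute K H from R.KH).pow_left _).eq.symm
  refine Submodule.smul_mem _ _ (Submodule.subset_span ⟨a, b, c, f + 1, ha, ?_⟩)
  rw [mul_assoc (F ^ a), c1]
  simp only [pow_succ', mul_assoc]

theorem V_Kpow (R : Rels n q K H E F) {d : ℕ} {x : A} (hx : x ∈ V k K H E F d) (m : ℕ) :
    K ^ m * x ∈ V k K H E F d := by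
  induction m with
  | zero => simpa using hx
  | succ m ih => rw [pow_succ', mul_assoc]; exact V_K R ih

theorem V_Hpow (R : Rels n q K H E F) {d : ℕ} {x : A} (hx : x ∈ V k K H E F d) (m : ℕ) :
    H ^ m * x ∈ V k K H E F d := by
  induction m with
  | zero => simpa using hx
  | succ m ih => rw [pow_succ', mul_assoc]; exact V_H R ih

theorem V_Fpow {d : ℕ} {x : A} (hx : x ∈ V k K H E F d) (m : ℕ) :
    F ^ m * x ∈ V k K H E F (d + m) := by
  induction m with
  | zero => simpa using hx
  | succ m ih => rw [pow_succ', mul_assoc]; exact V_F ih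

theorem V_L (R : Rels n q K H E F) {d : ℕ} {x : A} (hx : x ∈ V k K H E F d) :
    (K ^ (n - 1) * H) * x ∈ V k K H E F d := by
  rw [mul_assoc]; exact V_Kpow R (V_H R hx) _

theorem V_Lpow (R : Rels n q K H E F) {d : ℕ} {x : A} (hx : x ∈ V k K H E F d) (m : ℕ) :
    (K ^ (n - 1) * H) ^ m * x ∈ V k K H E F d := by
  induction m with
  | zero => simpa using hx
  | succ m ih => rw [pow_succ', mul_assoc]; exact V_L R ih

theorem swap_inv {x y : A} {s : k} (hs : s ≠ 0) (h : x * y = s • (y * x)) :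
    y * x = s⁻¹ • (x * y) := by
  rw [h, smul_smul, inv_mul_cancel₀ hs, one_smul]

theorem V_E (R : Rels n q K H E F) (hq0 : q ≠ 0) {d : ℕ} {x : A} (hx : x ∈ V k K H E F d) :
    E * x ∈ V k K H E F d := by
  refine V_mul (fun a b c f ha => ?_) hx
  refine V_mono ha ?_
  clear ha hx
  induction a with
  | zero =>
    have h1 := swap_inv (pow_ne_zero n hq0) R.KE
    have h2 := swap_inv (mul_ne_zero (pow_ne_zero n hq0) (inv_ne_zero (pow_ne_zero 2 hq0))) R.HE
    rw [pow_zero, one_mul]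
    simp only [← mul_assoc]
    rw [pow_swap h1]
    simp only [smul_mul_assoc]
    rw [mul_assoc (K ^ c), pow_swap h2]
    simp only [smul_mul_assoc, mul_smul_comm]
    refine Submodule.smul_mem _ _ (Submodule.smul_mem _ _
      (Submodule.subset_span ⟨0, b + 1, c, f, le_rfl, ?_⟩))
    simp only [pow_succ', mul_assoc, pow_zero, one_mul]
  | succ a ih =>
    have hEF : E * F = q • (F * E) - q • (1 : A) + q • (K ^ (n - 1) * H) := by
      rw [R.FE]
      match_scalars <;> field_simp <;> ring
    have hy : F ^ a * K ^ c * H ^ f * E ^ b ∈ V k K H E F a :=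
      Submodule.subset_span ⟨a, b, c, f, le_rfl, rfl⟩
    have : E * (F ^ (a + 1) * K ^ c * H ^ f * E ^ b) =
        (E * F) * (F ^ a * K ^ c * H ^ f * E ^ b) := by
      simp only [pow_succ', mul_assoc]
    rw [this, hEF, add_mul, sub_mul]
    simp only [smul_mul_assoc]
    refine Submodule.add_mem _ (Submodule.sub_mem _ (Submodule.smul_mem _ _ ?_)
      (Submodule.smul_mem _ _ ?_)) (Submodule.smul_mem _ _ ?_)
    · rw [mul_assoc]; exact V_F ih
    · rw [one_mul]; exact V_mono (by omega) hy
    · exact V_mono (by omega) (V_L R hy)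

theorem V_D (R : Rels n q K H E F) (hq0 : q ≠ 0) {d : ℕ} {x : A} (hx : x ∈ V k K H E F d) :
    D q (K ^ (n - 1) * H) E F * x ∈ V k K H E F (d + 1) := by
  unfold D
  rw [add_mul, add_mul]
  simp only [smul_mul_assoc]
  refine Submodule.add_mem _ (Submodule.add_mem _ (Submodule.smul_mem _ _ ?_)
    (Submodule.smul_mem _ _ ?_)) (Submodule.smul_mem _ _ ?_)
  · rw [mul_assoc]; exact V_E R hq0 (V_F hx)
  · rw [one_mul]; exact V_mono (by omega) hx
  · exact V_mono (by omega) (V_L R hx)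

theorem V_fac (R : Rels n q K H E F) (hq0 : q ≠ 0) (u : k) {d : ℕ} {x : A}
    (hx : x ∈ V k K H E F d) :
    fac q (K ^ (n - 1) * H) E F u * x ∈ V k K H E F (d + 1) := by
  unfold fac
  rw [sub_mul, sub_mul]
  simp only [smul_mul_assoc]
  refine Submodule.sub_mem _ (Submodule.sub_mem _ (Submodule.smul_mem _ _ ?_)
    (Submodule.smul_mem _ _ ?_)) (Submodule.smul_mem _ _ ?_)
  · exact V_D R hq0 hx
  · rw [one_mul]; exact V_mono (by omega) hx
  · exact V_mono (by omega) (V_L R hx)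

theorem V_G (R : Rels n q K H E F) (hq0 : q ≠ 0) (u : k) (p : ℕ) : ∀ {d : ℕ} {x : A},
    x ∈ V k K H E F d → G q (K ^ (n - 1) * H) E F u p * x ∈ V k K H E F (d + p) := by
  induction p with
  | zero => intro d x hx; simpa [G] using hx
  | succ p ih =>
    intro d x hx
    rw [G, mul_assoc, show d + (p + 1) = d + 1 + p by ring]
    exact ih (V_fac R hq0 _ hx)

theorem one_V : (1 : A) ∈ V k K H E F 0 :=
  Submodule.subset_span ⟨0, 0, 0, 0, le_rfl, by simp⟩

theorem V_gamE (R : Rels n q K H E F) (hq0 : q ≠ 0) (m r : ℕ) {e : A}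
    (he : e ∈ V k K H E F 0) :
    gamE q (K ^ (n - 1) * H) E F m r e ∈ V k K H E F (m + r) := by
  unfold gamE
  refine Submodule.smul_mem _ _ ?_
  rw [mul_assoc]
  have := V_G R hq0 q m (V_Fpow he r)
  exact V_mono (by omega) this

end rels

end QFLaux

namespace QFL
open QFLaux

variable (k : Type) [Field k] (n : ℕ) (q : k)

theorem rel_eq {x y : FreeAlgebra k (Fin 4)} (h : Rel k n q x y) :
    RingQuot.mkAlgHom k (Rel k n q) x = RingQuot.mkAlgHom k (Rel k n q) y :=
  RingQuot.mkAlgHom_rel k h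

theorem conj_swap {A : Type} [Ring A] [Algebra k A] {x y : A} {s : k} {p : ℕ}
    (h : x * y * x ^ (p - 1) = s • y) (hp : 0 < p) (hx : x ^ p = 1) :
    x * y = s • (y * x) := by
  have h1 : x ^ (p - 1) * x = 1 := by rw [← pow_succ, Nat.sub_add_cancel hp, hx]
  rw [← smul_mul_assoc, ← h, mul_assoc, h1, mul_one]

theorem rels (hn : 0 < n) : Rels n q (K k n q) (Kh k n q) (E k n q) (F k n q) := by
  have Kn : K k n q ^ n = 1 := by
    have := rel_eq k n q Rel.Kord
    simp only [map_pow, map_one] at this; exact this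
  have Hn : Kh k n q ^ n = (K k n q ^ (n - 1)) ^ 2 := by
    have := rel_eq k n q Rel.Khord
    simp only [map_pow] at this; exact this
  have HN : Kh k n q ^ (n ^ 2) = 1 := by
    rw [sq, pow_mul, Hn, ← pow_mul, ← pow_mul,
      show (n - 1) * (2 * n) = n * ((n - 1) * 2) by ring, pow_mul, Kn, one_pow]
  refine ⟨Kn, Hn, ?_, ?_, ?_, ?_, ?_, ?_, ?_, ?_⟩
  · have := rel_eq k n q Rel.KKh
    simp only [map_mul] at this; exact this
  · have := rel_eq k n q Rel.KE
    simp only [map_mul, map_pow, map_smul] at this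
    exact conj_swap k this hn Kn
  · have := rel_eq k n q Rel.KF
    simp only [map_mul, map_pow, map_smul] at this
    exact conj_swap k this hn Kn
  · have := rel_eq k n q Rel.KhE
    simp only [map_mul, map_pow, map_smul] at this
    exact conj_swap k this (by positivity) HN
  · have := rel_eq k n q Rel.KhF
    simp only [map_mul, map_pow, map_smul] at this
    exact conj_swap k this (by positivity) HN
  · have := rel_eq k n q Rel.Enil
    simp only [map_pow, map_zero] at this; exact this
  · have := rel_eq k n q Rel.Fnil
    simp only [map_pow, map_zero] at this; exact this
  · have := rel_eq k n q Rel.EF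
    simp only [map_mul, map_pow, map_smul, map_sub, map_one] at this
    change F k n q * E k n q - q⁻¹ • (E k n q * F k n q) = 1 - K k n q ^ (n - 1) * Kh k n q at this
    rw [add_sub_assoc, ← this]
    abel

theorem V_le_pbw (hn : 0 < n) :
    V k (K k n q) (Kh k n q) (E k n q) (F k n q) (n ^ 2 - 2) ≤ pbw k n q := by
  have R := rels k n q hn
  have hn2 : 0 < n ^ 2 := by positivity
  have HN : Kh k n q ^ (n ^ 2) = 1 := by
    rw [sq, pow_mul, R.Hn, ← pow_mul, ← pow_mul,
      show (n - 1) * (2 * n) = n * ((n - 1) * 2) by ring, pow_mul, R.Kn, one_pow]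
  refine Submodule.span_le.mpr ?_
  rintro x ⟨a, b, c, f, ha, rfl⟩
  by_cases hb : b ≤ n ^ 2 - 1
  · refine Submodule.subset_span ⟨a, b, c % n, f % n ^ 2, ha, hb, ?_, ?_, ?_⟩
    · have := Nat.mod_lt c hn; omega
    · have := Nat.mod_lt f hn2; omega
    · rw [← pow_eq_pow_mod c R.Kn, ← pow_eq_pow_mod f HN]
  · have : E k n q ^ b = 0 := pow_eq_zero_of_le (by omega) R.En
    rw [this, mul_zero]
    exact Submodule.zero_mem _

theorem oneJ_mem (R : Rels n q (K k n q) (Kh k n q) (E k n q) (F k n q)) (j : ℕ) :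
    oneJ k n q j ∈ V k (K k n q) (Kh k n q) (E k n q) (F k n q) 0 := by
  have h1 := one_V (k := k) (K := K k n q) (H := Kh k n q) (E := E k n q) (F := F k n q)
  have h2 : K k n q * Kh k n q ^ (n / 2) ∈ V k (K k n q) (Kh k n q) (E k n q) (F k n q) 0 := by
    have := V_K R (V_Hpow R h1 (n / 2))
    simpa using this
  unfold oneJ
  split_ifs
  · exact Submodule.smul_mem _ _ (Submodule.add_mem _ h1 h2)
  · exact Submodule.smul_mem _ _ (Submodule.sub_mem _ h1 h2)

theorem eIdem_mem (R : Rels n q (K k n q) (Kh k n q) (E k n q) (F k n q)) (i j : ℕ) :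
    eIdem k n q i j ∈ V k (K k n q) (Kh k n q) (E k n q) (F k n q) 0 := by
  unfold eIdem phi Kinv
  rw [smul_mul_assoc, Finset.sum_mul]
  refine Submodule.smul_mem _ _ (Submodule.sum_mem _ fun t _ => ?_)
  rw [smul_mul_assoc]
  exact Submodule.smul_mem _ _ (V_Lpow R (oneJ_mem k n q R j) t)

theorem comm_oneJ {w : U k n q} (h1 : Commute w (K k n q)) (h2 : Commute w (Kh k n q)) (j : ℕ) :
    Commute w (oneJ k n q j) := by
  unfold oneJ
  split_ifs
  · exact ((Commute.one_right w).add_right (h1.mul_right (h2.pow_right _))).smul_right _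
  · exact ((Commute.one_right w).sub_right (h1.mul_right (h2.pow_right _))).smul_right _

theorem comm_eIdem {w : U k n q} (h1 : Commute w (K k n q)) (h2 : Commute w (Kh k n q))
    (i j : ℕ) : Commute w (eIdem k n q i j) := by
  refine Commute.mul_right ?_ (comm_oneJ k n q h1 h2 j)
  unfold phi Kinv
  refine Commute.smul_right (Commute.sum_right _ _ _ fun t _ => Commute.smul_right ?_ _) _
  exact ((h1.pow_right _).mul_right h2).pow_right _

theorem exists_inv [CharZero k] (hn : 0 < n) (h4 : 4 ∣ n) (hq : IsPrimitiveRoot q (n ^ 2))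
    (i j h : ℕ) (hi : 1 ≤ i) (hi2 : i ≤ n ^ 2 / 2) (hh : h ≤ n ^ 2 - 2 * i) :
    ∃ z, gam k n q i j * E k n q ^ h * z = gam k n q i j := by
  by_cases hex : ∃! x, x ∈ pbw k n q ∧ F k n q * x = beta k n q i j
  swap
  · refine ⟨0, ?_⟩
    rw [gam, dif_neg hex, mul_zero]
  have hgam : gam k n q i j ∈ pbw k n q ∧ F k n q * gam k n q i j = beta k n q i j := by
    rw [gam, dif_pos hex]
    exact hex.choose_spec.1
  have R := rels k n q hn
  have hn4 : 4 ≤ n := Nat.le_of_dvd hn h4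
  have hN16 : 16 ≤ n ^ 2 := by nlinarith
  have hq0 : q ≠ 0 := hq.ne_zero (by omega)
  have hq1 : 1 - q ≠ 0 := by
    rw [sub_ne_zero]; exact (hq.ne_one (by omega)).symm
  have hLE := LE_of R hn hq0 hq.pow_eq_one
  have hLF := LF_of R hn hq0 hq.pow_eq_one
  have hFE := R.FE
  have h2n : 2 ∣ n := Dvd.dvd.trans (by norm_num) h4
  have hev : n ^ 2 / 2 * 2 = n ^ 2 := Nat.div_mul_cancel (h2n.trans (dvd_pow_self n two_ne_zero))
  obtain ⟨m, hm⟩ : ∃ m, 2 * i = m + 2 := ⟨2 * i - 2, by omega⟩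
  obtain ⟨r, hr⟩ : ∃ r, m + r + 2 = n ^ 2 := ⟨n ^ 2 - 2 * i, by omega⟩
  have cKH : Commute (K k n q) (Kh k n q) := R.KH
  have cKL : Commute (K k n q) (K k n q ^ (n - 1) * Kh k n q) :=
    ((Commute.refl _).pow_right _).mul_right cKH
  have cHL : Commute (Kh k n q) (K k n q ^ (n - 1) * Kh k n q) :=
    (cKH.symm.pow_right _).mul_right (Commute.refl _)
  have heL : Commute (eIdem k n q i j) (K k n q ^ (n - 1) * Kh k n q) :=
    (comm_eIdem k n q cKL.symm cHL.symm i j).symm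
  have heD : Commute (eIdem k n q i j)
      (D q (K k n q ^ (n - 1) * Kh k n q) (E k n q) (F k n q)) :=
    (comm_eIdem k n q (comm_D' (K_EF R hq0) cKL).symm (comm_D' (H_EF R hq0) cHL).symm i j).symm
  have heL' : eIdem k n q i j * (K k n q ^ (n - 1) * Kh k n q) =
      q ^ (m + 2) • eIdem k n q i j := by
    have hc := comm_oneJ k n q cKL.symm cHL.symm j
    have hs := sum_L (K k n q ^ (n - 1) * Kh k n q) (q ^ (2 * i)) (n ^ 2 / 2)
      (pow_ne_zero _ hq0) (by
        rw [← pow_mul, show 2 * i * (n ^ 2 / 2) = (n ^ 2 / 2 * 2) * i by ring, hev, pow_mul,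
          hq.pow_eq_one, one_pow]) (L_pow R h2n)
    simp only [← inv_pow, ← pow_mul] at hs
    unfold eIdem
    rw [mul_assoc, ← hc.eq, ← mul_assoc]
    unfold phi Kinv
    rw [smul_mul_assoc, hs, ← hm, smul_comm, smul_mul_assoc]
  have hg : gam k n q i j =
      gamE q (K k n q ^ (n - 1) * Kh k n q) (E k n q) (F k n q) m r (eIdem k n q i j) := by
    refine hex.unique hgam ⟨?_, ?_⟩
    · have := V_gamE R hq0 m r (eIdem_mem k n q R i j)
      exact V_le_pbw k n q hn (V_mono (by omega) this)
    · rw [F_gamE hq0 hLE hLF hFE hq1, beta, alpha, show 2 * i - 2 = m by omega,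
        show m + r + 1 = n ^ 2 - 1 by omega]
  rw [hg]
  exact QFLaux.main hq0 hLE hLF hFE hq hr R.Fn heD heL heL' h (by omega)

end QFL

open QFL in
/-- Corollary 2.11: right multiplication by `E^h` is injective on `P_{2i,j}` and gives an
isomorphism of left `u`-modules `P_{2i,j} ≅ P_{2i,j}E^h` for `0 ≤ h ≤ n²-2i`. -/
theorem statement7 (k : Type) [Field k] [IsAlgClosed k] [CharZero k]
    (n : ℕ) (hn : 0 < n) (h4 : 4 ∣ n) (q : k) (hq : IsPrimitiveRoot q (n ^ 2)) :
    ∀ i j h : ℕ, 1 ≤ i → i ≤ n ^ 2 / 2 → j ≤ 1 → h ≤ n ^ 2 - 2 * i →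
      (∀ x ∈ P k n q i j, ∀ y ∈ P k n q i j,
        x * E k n q ^ h = y * E k n q ^ h → x = y) ∧
      Nonempty ((P k n q i j) ≃ₗ[U k n q]
        (Submodule.map (LinearMap.toSpanSingleton (U k n q) (U k n q) (E k n q ^ h))
          (P k n q i j))) := by
  intro i j h hi hi2 _ hh
  obtain ⟨z, hz⟩ := exists_inv k n q hn h4 hq i j h hi hi2 hh
  have key : ∀ x ∈ P k n q i j, x * E k n q ^ h * z = x := by
    intro x hx
    obtain ⟨a, rfl⟩ := Submodule.mem_span_singleton.mp hx
    rw [smul_eq_mul, mul_assoc, mul_assoc, ← mul_assoc (gam k n q i j), hz]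
  have inj : ∀ x ∈ P k n q i j, ∀ y ∈ P k n q i j,
      x * E k n q ^ h = y * E k n q ^ h → x = y := by
    intro x hx y hy hxy
    rw [← key x hx, ← key y hy, hxy]
  refine ⟨inj, ⟨?_⟩⟩
  have hinj : Function.Injective
      ((LinearMap.toSpanSingleton (U k n q) (U k n q) (E k n q ^ h)).domRestrict (P k n q i j)) := by
    rintro ⟨x, hx⟩ ⟨y, hy⟩ hxy
    exact Subtype.ext (inj x hx y hy hxy)
  exact (LinearEquiv.ofInjective _ hinj).trans
    (LinearEquiv.ofEq _ _ (LinearMap.range_domRestrict _ _))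
end
end

section
/- As a left module over itself, u is the internal direct sum of the left ideals P_{2i,j}E^h := {x·E^h : x ∈ P_{2i,j}}, taken over j ∈ {0,1}, 1 ≤ i ≤ n²/2 and 0 ≤ h ≤ n²−2i; that is, these submodules are independent and their sum is all of u. -/
noncomputable section

open scoped TensorProduct

namespace QFLaux

set_option linter.unusedSectionVars false

/-- Idempotent attached to a character. -/
def ee {k A : Type} [Field k] [Ring A] [Algebra k A] (M : ℕ) (g c : A) (κ ε : k) : A :=
  ((M : k)⁻¹ • ∑ t ∈ Finset.range M, (κ⁻¹) ^ t • g ^ t) * ((2 : k)⁻¹ • (1 + ε • c))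

structure Data {k A : Type} [Field k] [CharZero k] [Ring A] [Algebra k A] (N M : ℕ) (q : k)
    (E F g c : A) : Prop where
  hN : N = 2 * M
  hM : 0 < M
  hq : IsPrimitiveRoot q N
  gE : g * E = (q ^ 2)⁻¹ • (E * g)
  gF : g * F = q ^ 2 • (F * g)
  cE : c * E = -(E * c)
  cF : c * F = -(F * c)
  gc : g * c = c * g
  gM : g ^ M = 1
  cc : c * c = 1
  EN : E ^ N = 0
  FN : F ^ N = 0
  FE : F * E = q⁻¹ • (E * F) + (1 - g)
  gen : Algebra.adjoin k {g, c, E, F} = ⊤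
  li : LinearIndependent k (fun x : Fin N × Fin N × Fin M × Fin 2 =>
    F ^ (x.1 : ℕ) * (E ^ (x.2.1 : ℕ) * ee M g c (q ^ (2 * (x.2.2.1 : ℕ))) ((-1) ^ (x.2.2.2 : ℕ))))

/-- Gaussian number. -/
def gn {k : Type} [Field k] (x : k) (m : ℕ) : k := ∑ t ∈ Finset.range m, x ^ t

lemma gn_succ {k : Type} [Field k] (x : k) (m : ℕ) : gn x (m + 1) = gn x m + x ^ m :=
  Finset.sum_range_succ _ _

lemma gn_succ' {k : Type} [Field k] (x : k) (m : ℕ) : gn x (m + 1) = 1 + x * gn x m := by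
  unfold gn
  rw [Finset.sum_range_succ', Finset.mul_sum, add_comm]
  simp [pow_succ']

lemma gn_mul {k : Type} [Field k] (x : k) (m : ℕ) : (x - 1) * gn x m = x ^ m - 1 :=
  mul_geom_sum x m

lemma FE_pow {k A : Type} [Field k] [Ring A] [Algebra k A] {p : k} {E F g : A}
    (gE : g * E = p ^ 2 • (E * g)) (FE : F * E = p • (E * F) + (1 - g)) (m : ℕ) :
    F * E ^ (m + 1) = p ^ (m + 1) • (E ^ (m + 1) * F) +
      gn p (m + 1) • (E ^ m * (1 - p ^ m • g)) := by
  induction m with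
  | zero => simp [gn, FE]
  | succ m ih =>
    rw [pow_succ E (m + 1), ← mul_assoc, ih, add_mul, smul_mul_assoc, mul_assoc, FE,
      smul_mul_assoc, mul_assoc (E ^ m), sub_mul, one_mul, smul_mul_assoc, gE]
    have h1 : gn p (m + 1 + 1) = gn p (m + 1) + p ^ (m + 1) := gn_succ _ _
    have h2 : gn p (m + 1 + 1) * p ^ (m + 1) = p ^ (m + 1) * (1 + p * gn p (m + 1)) := by
      rw [gn_succ']; ring
    have e1 : ∀ X : A, E ^ m * (E * X) = E ^ (m + 1) * X := by
      intro X; rw [← mul_assoc, ← pow_succ]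
    simp only [mul_add, mul_sub, mul_smul_comm, mul_one, e1, ← pow_succ, smul_sub,
      smul_add, smul_smul]
    have e2 : E ^ (m + 1) * (E * F) = E ^ (m + 2) * F := by rw [← mul_assoc, ← pow_succ]
    rw [h2, h1, e2]
    module

lemma EF_pow {k A : Type} [Field k] [Ring A] [Algebra k A] {q : k} {E F g : A}
    (gF : g * F = q ^ 2 • (F * g)) (EF : E * F = q • (F * E) - q • (1 - g)) (m : ℕ) :
    E * F ^ (m + 1) = q ^ (m + 1) • (F ^ (m + 1) * E) -
      (q * gn q (m + 1)) • (F ^ m * (1 - q ^ m • g)) := by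
  induction m with
  | zero => simp [gn, EF]
  | succ m ih =>
    rw [pow_succ F (m + 1), ← mul_assoc, ih, sub_mul, smul_mul_assoc, mul_assoc, EF,
      smul_mul_assoc, mul_assoc (F ^ m), sub_mul, one_mul, smul_mul_assoc, gF]
    have h1 : gn q (m + 1 + 1) = gn q (m + 1) + q ^ (m + 1) := gn_succ _ _
    have h2 : q * (gn q (m + 1 + 1) * q ^ (m + 1)) = q * (q ^ (m + 1) * (1 + q * gn q (m + 1))) := by
      rw [gn_succ']; ring
    have e1 : ∀ X : A, F ^ m * (F * X) = F ^ (m + 1) * X := by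
      intro X; rw [← mul_assoc, ← pow_succ]
    simp only [mul_sub, mul_smul_comm, mul_one, e1, ← pow_succ, mul_assoc, smul_sub,
      smul_smul]
    have e2 : F ^ (m + 1) * (F * E) = F ^ (m + 2) * E := by rw [← mul_assoc, ← pow_succ]
    rw [h2, h1, e2]
    module

section idem
variable {k A : Type} [Field k] [CharZero k] [Ring A] [Algebra k A] {M : ℕ} {q : k} {E F g c : A}

lemma ee_eq (κ ε : k) : ee M g c κ ε = ((M : k)⁻¹ * 2⁻¹) •
    ((∑ t ∈ Finset.range M, (κ⁻¹) ^ t • g ^ t) * (1 + ε • c)) := by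
  unfold ee
  rw [mul_smul_comm, smul_mul_assoc, smul_smul, mul_comm]

lemma ee_g {κ ε : k} (gM : g ^ M = 1) (hκ : κ ^ M = 1) (hM : 0 < M) :
    g * ee M g c κ ε = κ • ee M g c κ ε := by
  have hk0 : κ ≠ 0 := by rintro rfl; simp [hM.ne'] at hκ
  have key : g * ∑ t ∈ Finset.range M, (κ⁻¹) ^ t • g ^ t
      = κ • ∑ t ∈ Finset.range M, (κ⁻¹) ^ t • g ^ t := by
    have h := mul_geom_sum (κ⁻¹ • g) M
    rw [smul_pow, gM, inv_pow, hκ] at h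
    simp only [smul_pow, inv_one, one_smul, sub_self, sub_mul, one_mul, smul_mul_assoc] at h
    have h2 := sub_eq_zero.mp h
    conv_rhs => rw [← h2]
    rw [smul_smul, mul_inv_cancel₀ hk0, one_smul]
  rw [ee_eq, mul_smul_comm, ← mul_assoc, key, smul_comm, smul_mul_assoc]

lemma ee_c {κ ε : k} (gc : g * c = c * g) (cc : c * c = 1) (hε : ε ^ 2 = 1) :
    c * ee M g c κ ε = ε • ee M g c κ ε := by
  have hcom : c * ∑ t ∈ Finset.range M, (κ⁻¹) ^ t • g ^ t
      = (∑ t ∈ Finset.range M, (κ⁻¹) ^ t • g ^ t) * c := by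
    rw [Finset.mul_sum, Finset.sum_mul]
    refine Finset.sum_congr rfl fun t _ => ?_
    rw [mul_smul_comm, smul_mul_assoc]
    congr 1
    exact ((Commute.pow_left (show Commute g c from gc) t).eq).symm
  have hT : c * (1 + ε • c) = ε • (1 + ε • c) := by
    rw [mul_add, mul_one, mul_smul_comm, cc, smul_add, smul_smul,
      ← pow_two, hε, one_smul, add_comm]
  rw [ee_eq, mul_smul_comm, ← mul_assoc, hcom, mul_assoc, hT, mul_smul_comm, smul_comm]

lemma ee_E (hq0 : q ≠ 0) {κ ε : k} (gE : g * E = (q ^ 2)⁻¹ • (E * g)) (cE : c * E = -(E * c)) :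
    E * ee M g c κ ε = ee M g c ((q ^ 2)⁻¹ * κ) (-ε) * E := by
  have hEg : E * g = q ^ 2 • (g * E) := by
    rw [gE, smul_smul, mul_inv_cancel₀ (pow_ne_zero 2 hq0), one_smul]
  have hEgt : ∀ t : ℕ, E * g ^ t = (q ^ 2) ^ t • (g ^ t * E) := by
    intro t
    induction t with
    | zero => simp
    | succ t ih =>
      rw [pow_succ, ← mul_assoc, ih, smul_mul_assoc, mul_assoc, hEg, mul_smul_comm, smul_smul,
        mul_assoc, pow_succ (q ^ 2)]
  have hEc : E * c = - (c * E) := by rw [cE, neg_neg]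
  have h2 : (1 + (-ε) • c) * E = E * (1 + ε • c) := by
    rw [mul_add, mul_one, mul_smul_comm, hEc, add_mul, one_mul, smul_mul_assoc]; module
  rw [ee_eq, ee_eq, smul_mul_assoc, mul_assoc, h2, mul_smul_comm, ← mul_assoc, ← mul_assoc]
  congr 2
  rw [Finset.mul_sum, Finset.sum_mul]
  refine Finset.sum_congr rfl fun t _ => ?_
  rw [mul_smul_comm, hEgt, smul_smul, smul_mul_assoc, ← mul_pow, mul_inv, inv_inv, mul_comm]

lemma ee_sum {N : ℕ} (hN : N = 2 * M) (hM : 0 < M) (hq : IsPrimitiveRoot q N) :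
    ∑ i ∈ Finset.range M, ∑ j ∈ Finset.range 2, ee M g c (q ^ (2 * i)) ((-1) ^ j) = 1 := by
  have hq2 : IsPrimitiveRoot (q ^ 2)⁻¹ M :=
    (hq.pow (by omega) hN).inv
  have h1 : ∀ i, ∑ j ∈ Finset.range 2, ee M g c (q ^ (2 * i)) ((-1) ^ j)
      = (M : k)⁻¹ • ∑ t ∈ Finset.range M, ((q ^ (2 * i))⁻¹) ^ t • g ^ t := by
    intro i
    simp only [Finset.sum_range_succ, Finset.sum_range_zero, ee]
    rw [zero_add, ← mul_add]
    have : (2 : k)⁻¹ • (1 + ((-1 : k)) ^ 0 • c) + (2 : k)⁻¹ • (1 + ((-1 : k)) ^ 1 • c)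
      = (1 : A) := by
      have : (2 : k)⁻¹ + 2⁻¹ = 1 := by norm_num
      rw [← smul_add, pow_zero, pow_one]
      have h3 : (1 + (1 : k) • c + (1 + (-1 : k) • c)) = (2 : k) • (1 : A) := by module
      rw [h3, smul_smul, inv_mul_cancel₀ two_ne_zero, one_smul]
    rw [this, mul_one]
  simp only [h1]
  rw [← Finset.smul_sum, Finset.sum_comm]
  have h2 : ∀ t ∈ Finset.range M, ∑ i ∈ Finset.range M, ((q ^ (2 * i))⁻¹) ^ t • g ^ t
      = if t = 0 then (M : k) • (1 : A) else 0 := by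
    intro t ht
    rw [← Finset.sum_smul]
    have h3 : ∀ i, ((q ^ (2 * i))⁻¹) ^ t = (((q ^ 2)⁻¹) ^ t) ^ i := by
      intro i; rw [pow_mul, ← inv_pow, ← pow_mul, ← pow_mul, mul_comm]
    simp only [h3]
    split_ifs with h0
    · subst h0; simp
    · have h4 := mul_geom_sum (((q ^ 2)⁻¹) ^ t) M
      rw [← pow_mul, mul_comm t M, pow_mul, hq2.pow_eq_one, one_pow, sub_self] at h4
      rcases mul_eq_zero.mp h4 with h5 | h5
      · exact absurd (sub_eq_zero.mp h5)
          (hq2.pow_ne_one_of_pos_of_lt h0 (Finset.mem_range.mp ht))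
      · rw [h5, zero_smul]
  rw [Finset.sum_congr rfl h2, Finset.sum_ite_eq' ]
  rw [if_pos (Finset.mem_range.mpr hM), smul_smul, inv_mul_cancel₀ (by exact_mod_cast hM.ne'),
    one_smul]

end idem

section data
variable {k A : Type} [Field k] [CharZero k] [Ring A] [Algebra k A] {N M : ℕ} {q : k}
  {E F g c : A}

lemma Data.q0 (D : Data N M q E F g c) : q ≠ 0 :=
  D.hq.ne_zero (by have := D.hN; have := D.hM; omega)

lemma Data.hFE (D : Data N M q E F g c) (m : ℕ) :
    F * E ^ (m + 1) = (q⁻¹) ^ (m + 1) • (E ^ (m + 1) * F) +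
      gn q⁻¹ (m + 1) • (E ^ m * (1 - (q⁻¹) ^ m • g)) :=
  FE_pow (by rw [D.gE, inv_pow]) D.FE m

lemma Data.hEF (D : Data N M q E F g c) (m : ℕ) :
    E * F ^ (m + 1) = q ^ (m + 1) • (F ^ (m + 1) * E) -
      (q * gn q (m + 1)) • (F ^ m * (1 - q ^ m • g)) := by
  refine EF_pow D.gF ?_ m
  rw [D.FE, smul_add, smul_smul, mul_inv_cancel₀ D.q0, one_smul, add_sub_cancel_right]

/-- structure constant -/
def cfn (q : k) (r m : ℕ) : k := gn q⁻¹ (m + 1) * (1 - (q⁻¹) ^ m * q ^ r)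

lemma cfn_self (hq : q ≠ 0) (r : ℕ) : cfn q r r = 0 := by
  unfold cfn
  rw [← mul_pow, inv_mul_cancel₀ hq]; simp

lemma cfn_ne (hq0 : q ≠ 0) (hq : IsPrimitiveRoot q N) {r m : ℕ} (hr : r < N) (hm : m + 1 < N)
    (h : m ≠ r) : cfn q r m ≠ 0 := by
  unfold cfn
  refine mul_ne_zero ?_ ?_
  · intro h0
    have h1 := gn_mul q⁻¹ (m + 1)
    rw [h0, mul_zero] at h1
    exact hq.inv.pow_ne_one_of_pos_of_lt (Nat.succ_ne_zero m) hm (sub_eq_zero.mp h1.symm)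
  · intro h0
    have h1 : q ^ m = q ^ r := by
      have h2 := (sub_eq_zero.mp h0)
      have h3 : q ^ m * ((q⁻¹) ^ m * q ^ r) = q ^ r := by
        rw [← mul_assoc, ← mul_pow, mul_inv_cancel₀ hq0, one_pow, one_mul]
      rw [← h2, mul_one] at h3
      exact h3
    exact h (hq.pow_inj (by omega) hr h1)

/-- `F E^(m+1) x` for a weight vector. -/
lemma Data.FEx (D : Data N M q E F g c) {r : ℕ} {x : A} (hx : g * x = q ^ r • x) (m : ℕ) :
    F * (E ^ (m + 1) * x) = (q⁻¹) ^ (m + 1) • (E ^ (m + 1) * (F * x)) +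
      cfn q r m • (E ^ m * x) := by
  rw [← mul_assoc, D.hFE, add_mul, smul_mul_assoc, mul_assoc, smul_mul_assoc, mul_assoc,
    sub_mul, one_mul, smul_mul_assoc, hx, smul_smul]
  congr 1
  unfold cfn
  rw [mul_smul, mul_sub, mul_smul_comm, mul_smul_comm]
  module

lemma Data.FE1 (D : Data N M q E F g c) {r : ℕ} {x : A} (hx : g * x = q ^ r • x)
    (hF : F * x = 0) (s m : ℕ) :
    ∃ C : k, F ^ s * (E ^ (m + s) * x) = C • (E ^ m * x) ∧
      (r < N → m + s < N → (r < m ∨ m + s ≤ r) → C ≠ 0) := by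
  induction s with
  | zero => exact ⟨1, by simp, fun _ _ _ => one_ne_zero⟩
  | succ s ih =>
    obtain ⟨C, hC, hC2⟩ := ih
    refine ⟨cfn q r (m + s) * C, ?_, fun h1 h2 h3 => ?_⟩
    · rw [pow_succ, mul_assoc, ← add_assoc, D.FEx hx, hF, mul_zero, smul_zero, zero_add,
        mul_smul_comm, hC, smul_smul]
    · exact mul_ne_zero (cfn_ne D.q0 D.hq h1 (by omega) (by omega))
        (hC2 h1 (by omega) (by omega))

lemma Data.FE2 (D : Data N M q E F g c) {r r' : ℕ} {x y : A} (hx : g * x = q ^ r • x)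
    (hF : F * x = 0) (hy : g * y = q ^ r' • y) (hFy : F * y = E ^ r * x) (s m : ℕ) :
    ∃ C d : k, F ^ s * (E ^ (m + s) * y) = C • (E ^ m * y) + d • (E ^ (m + 1 + r) * x) ∧
      (r' < N → m + s < N → (r' < m ∨ m + s ≤ r') → C ≠ 0) := by
  induction s with
  | zero => exact ⟨1, 0, by simp, fun _ _ _ => one_ne_zero⟩
  | succ s ih =>
    obtain ⟨C, d, hC, hC2⟩ := ih
    obtain ⟨C', hC', -⟩ := D.FE1 hx hF s (m + 1 + r)
    refine ⟨cfn q r' (m + s) * C, cfn q r' (m + s) * d + (q⁻¹) ^ (m + s + 1) * C', ?_,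
      fun h1 h2 h3 => ?_⟩
    · rw [pow_succ, mul_assoc, ← add_assoc, D.FEx hy, hFy, mul_add, mul_smul_comm,
        mul_smul_comm, hC, ← mul_assoc (E ^ (m + s + 1)), ← pow_add,
        show m + s + 1 + r = m + 1 + r + s by ring, hC']
      module
    · exact mul_ne_zero (cfn_ne D.q0 D.hq h1 (by omega) (by omega))
        (hC2 h1 (by omega) (by omega))

lemma Data.top1 (D : Data N M q E F g c) {r : ℕ} {x y : A} (hr : r + 2 ≤ N)
    (hx : g * x = q ^ r • x) (hF : F * x = 0) (hy : g * y = q ^ (N - 2 - r) • y)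
    (hFy : F * y = E ^ r * x) :
    ∃ C : k, C ≠ 0 ∧ F ^ (N - 1) * (E ^ (N - 2 - r) * y) = C • x := by
  obtain ⟨C, d, h, hC⟩ := D.FE2 hx hF hy hFy (N - 2 - r) 0
  obtain ⟨C', h', hC'⟩ := D.FE1 hx hF r 0
  refine ⟨C * C', mul_ne_zero (hC (by omega) (by omega) (by omega))
    (hC' (by omega) (by omega) (by omega)), ?_⟩
  rw [show N - 1 = r + (1 + (N - 2 - r)) by omega, pow_add, pow_add, mul_assoc, mul_assoc]
  simp only [zero_add, pow_zero, one_mul] at h h'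
  rw [h, mul_add, mul_smul_comm, mul_smul_comm, pow_one, hFy, add_comm 1 r, D.FEx hx, hF,
    cfn_self D.q0, mul_zero, smul_zero, zero_smul, add_zero, smul_zero, add_zero,
    mul_smul_comm, h', smul_smul]

lemma Data.top2 (D : Data N M q E F g c) {r : ℕ} {x y : A} (hr : r + 2 ≤ N)
    (hx : g * x = q ^ r • x) (hF : F * x = 0) (hy : g * y = q ^ (N - 2 - r) • y)
    (hFy : F * y = E ^ r * x) :
    ∃ C : k, C ≠ 0 ∧ F ^ (N - 1) * (E ^ (N - 1) * y) = C • (E ^ (r + 1) * x) := by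
  obtain ⟨C, d, h, hC⟩ := D.FE2 hx hF hy hFy r (N - 1 - r)
  obtain ⟨C', h', hC'⟩ := D.FE1 hx hF (N - 2 - r) (r + 1)
  refine ⟨C * (q⁻¹ ^ (N - 2 - r + 1) * C'), mul_ne_zero (hC (by omega) (by omega) (by omega))
    (mul_ne_zero (pow_ne_zero _ (inv_ne_zero D.q0))
    (hC' (by omega) (by omega) (by omega))), ?_⟩
  have e0 : E ^ (N - 1 - r + 1 + r) = 0 := by
    rw [show N - 1 - r + 1 + r = N by omega, D.EN]
  rw [e0, zero_mul, smul_zero, add_zero, show N - 1 - r + r = N - 1 by omega] at h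
  have e1 : F ^ (N - 1) = F ^ (N - 2 - r) * (F * F ^ r) := by
    rw [← pow_succ', ← pow_add]; congr 1; omega
  rw [e1, mul_assoc, mul_assoc, h, show N - 1 - r = N - 2 - r + 1 by omega, mul_smul_comm,
    D.FEx hy, cfn_self D.q0, zero_smul, add_zero, hFy, ← mul_assoc (E ^ _), ← pow_add,
    mul_smul_comm, mul_smul_comm, show N - 2 - r + 1 + r = r + 1 + (N - 2 - r) by omega, h',
    smul_smul, smul_smul, mul_assoc]

lemma Data.epow (D : Data N M q E F g c) (κ ε : k) (m : ℕ) :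
    E ^ m * ee M g c κ ε = ee M g c ((q ^ 2)⁻¹ ^ m * κ) ((-1) ^ m * ε) * E ^ m := by
  induction m with
  | zero => simp
  | succ m ih =>
    rw [pow_succ', mul_assoc, ih, ← mul_assoc, ee_E D.q0 D.gE D.cE, mul_assoc]
    congr 2
    · ring
    · ring

lemma pow_comm_scalar {X Y : A} {a : k} (h : X * Y = a • (Y * X)) (m : ℕ) :
    X * Y ^ m = a ^ m • (Y ^ m * X) := by
  induction m with
  | zero => simp
  | succ m ih =>
    rw [pow_succ, ← mul_assoc, ih, smul_mul_assoc, mul_assoc, h, mul_smul_comm, smul_smul,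
      mul_assoc, pow_succ a]

lemma Data.gEx (D : Data N M q E F g c) {κ : k} {x : A} (hx : g * x = κ • x) (m : ℕ) :
    g * (E ^ m * x) = ((q ^ 2)⁻¹ ^ m * κ) • (E ^ m * x) := by
  rw [← mul_assoc, pow_comm_scalar D.gE, smul_mul_assoc, mul_assoc, hx, mul_smul_comm, smul_smul]

lemma Data.gFx (D : Data N M q E F g c) {κ : k} {x : A} (hx : g * x = κ • x) (m : ℕ) :
    g * (F ^ m * x) = ((q ^ 2) ^ m * κ) • (F ^ m * x) := by
  rw [← mul_assoc, pow_comm_scalar D.gF, smul_mul_assoc, mul_assoc, hx, mul_smul_comm, smul_smul]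

lemma Data.cEx (D : Data N M q E F g c) {κ : k} {x : A} (hx : c * x = κ • x) (m : ℕ) :
    c * (E ^ m * x) = ((-1) ^ m * κ) • (E ^ m * x) := by
  rw [← mul_assoc, pow_comm_scalar (a := (-1 : k)) (by rw [D.cE]; module), smul_mul_assoc,
    mul_assoc, hx, mul_smul_comm, smul_smul]

lemma Data.cFx (D : Data N M q E F g c) {κ : k} {x : A} (hx : c * x = κ • x) (m : ℕ) :
    c * (F ^ m * x) = ((-1) ^ m * κ) • (F ^ m * x) := by
  rw [← mul_assoc, pow_comm_scalar (a := (-1 : k)) (by rw [D.cF]; module), smul_mul_assoc,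
    mul_assoc, hx, mul_smul_comm, smul_smul]

/-- span of `E^b e_w` -/
def BB (N M : ℕ) (k : Type) {A : Type} [Field k] [Ring A] [Algebra k A] (E g c : A) :
    Submodule k A :=
  Submodule.span k {x | ∃ (b : ℕ) (κ ε : k), b < N ∧ κ ^ M = 1 ∧ ε ^ 2 = 1 ∧
    x = E ^ b * ee M g c κ ε}

/-- span of `F^a E^b e_w`, `a < r` -/
def Fl (r N M : ℕ) (k : Type) {A : Type} [Field k] [Ring A] [Algebra k A] (E F g c : A) :
    Submodule k A :=
  Submodule.span k {x | ∃ (a : ℕ) (y : A), a < r ∧ y ∈ BB N M k E g c ∧ x = F ^ a * y}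

lemma BB_ind {f : A →ₗ[k] A} {S : Submodule k A}
    (h : ∀ (b : ℕ) (κ ε : k), b < N → κ ^ M = 1 → ε ^ 2 = 1 → f (E ^ b * ee M g c κ ε) ∈ S)
    {y : A} (hy : y ∈ BB N M k E g c) : f y ∈ S := by
  have : BB N M k E g c ≤ S.comap f := by
    refine Submodule.span_le.mpr ?_
    rintro _ ⟨b, κ, ε, hb, hκ, hε, rfl⟩
    exact h b κ ε hb hκ hε
  exact this hy

lemma Fl_ind {r : ℕ} {f : A →ₗ[k] A} {S : Submodule k A}
    (h : ∀ (a : ℕ) (y : A), a < r → y ∈ BB N M k E g c → f (F ^ a * y) ∈ S)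
    {y : A} (hy : y ∈ Fl r N M k E F g c) : f y ∈ S := by
  have : Fl r N M k E F g c ≤ S.comap f := by
    refine Submodule.span_le.mpr ?_
    rintro _ ⟨a, y, ha, hy, rfl⟩
    exact h a y ha hy
  exact this hy

lemma Data.BB_E (D : Data N M q E F g c) {y : A} (hy : y ∈ BB N M k E g c) :
    E * y ∈ BB N M k E g c := by
  refine BB_ind (f := LinearMap.mulLeft k E) ?_ hy
  intro b κ ε hb hκ hε
  rw [LinearMap.mulLeft_apply, ← mul_assoc, ← pow_succ']
  rcases Nat.lt_or_ge (b + 1) N with h | h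
  · exact Submodule.subset_span ⟨b + 1, κ, ε, h, hκ, hε, rfl⟩
  · rw [show b + 1 = N by omega, D.EN, zero_mul]; exact zero_mem _

lemma Data.BB_g (D : Data N M q E F g c) {y : A} (hy : y ∈ BB N M k E g c) :
    g * y ∈ BB N M k E g c := by
  refine BB_ind (f := LinearMap.mulLeft k g) ?_ hy
  intro b κ ε hb hκ hε
  rw [LinearMap.mulLeft_apply, D.gEx (ee_g D.gM hκ D.hM)]
  exact Submodule.smul_mem _ _ (Submodule.subset_span ⟨b, κ, ε, hb, hκ, hε, rfl⟩)

lemma Data.BB_c (D : Data N M q E F g c) {y : A} (hy : y ∈ BB N M k E g c) :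
    c * y ∈ BB N M k E g c := by
  refine BB_ind (f := LinearMap.mulLeft k c) ?_ hy
  intro b κ ε hb hκ hε
  rw [LinearMap.mulLeft_apply, D.cEx (ee_c D.gc D.cc hε)]
  exact Submodule.smul_mem _ _ (Submodule.subset_span ⟨b, κ, ε, hb, hκ, hε, rfl⟩)

lemma Fl_mem {r a : ℕ} (ha : a < r) {y : A} (hy : y ∈ BB N M k E g c) :
    F ^ a * y ∈ Fl r N M k E F g c := Submodule.subset_span ⟨a, y, ha, hy, rfl⟩

lemma Data.Fl_g (D : Data N M q E F g c) {r : ℕ} {y : A} (hy : y ∈ Fl r N M k E F g c) :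
    g * y ∈ Fl r N M k E F g c := by
  refine Fl_ind (f := LinearMap.mulLeft k g) ?_ hy
  intro a y ha hy
  rw [LinearMap.mulLeft_apply, ← mul_assoc, pow_comm_scalar D.gF, smul_mul_assoc, mul_assoc]
  exact Submodule.smul_mem _ _ (Fl_mem ha (D.BB_g hy))

lemma Data.Fl_c (D : Data N M q E F g c) {r : ℕ} {y : A} (hy : y ∈ Fl r N M k E F g c) :
    c * y ∈ Fl r N M k E F g c := by
  refine Fl_ind (f := LinearMap.mulLeft k c) ?_ hy
  intro a y ha hy
  rw [LinearMap.mulLeft_apply, ← mul_assoc,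
    pow_comm_scalar (a := (-1 : k)) (by rw [D.cF]; module), smul_mul_assoc, mul_assoc]
  exact Submodule.smul_mem _ _ (Fl_mem ha (D.BB_c hy))

lemma Data.EFy (D : Data N M q E F g c) {r a : ℕ} (ha : a ≤ r) {y : A}
    (hy : y ∈ BB N M k E g c) :
    E * (F ^ a * y) - q ^ a • (F ^ a * (E * y)) ∈ Fl r N M k E F g c := by
  cases a with
  | zero => simp
  | succ a =>
    rw [← mul_assoc, D.hEF, sub_mul, smul_mul_assoc, smul_mul_assoc, mul_assoc, sub_sub_cancel_left,
      mul_assoc]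
    refine Submodule.neg_mem _ (Submodule.smul_mem _ _ (Fl_mem ha ?_))
    rw [sub_mul, one_mul, smul_mul_assoc]
    exact Submodule.sub_mem _ hy (Submodule.smul_mem _ _ (D.BB_g hy))

lemma Data.Fl_E (D : Data N M q E F g c) {r : ℕ} {y : A} (hy : y ∈ Fl r N M k E F g c) :
    E * y ∈ Fl r N M k E F g c := by
  refine Fl_ind (f := LinearMap.mulLeft k E) ?_ hy
  intro a y ha hy
  rw [LinearMap.mulLeft_apply]
  have h := D.EFy ha.le hy
  have h2 : q ^ a • (F ^ a * (E * y)) ∈ Fl r N M k E F g c :=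
    Submodule.smul_mem _ _ (Fl_mem ha (D.BB_E hy))
  simpa using Submodule.add_mem _ h h2

lemma Data.Fl_F (D : Data N M q E F g c) {y : A} (hy : y ∈ Fl N N M k E F g c) :
    F * y ∈ Fl N N M k E F g c := by
  refine Fl_ind (f := LinearMap.mulLeft k F) ?_ hy
  intro a y ha hy
  rw [LinearMap.mulLeft_apply, ← mul_assoc, ← pow_succ']
  rcases Nat.lt_or_ge (a + 1) N with h | h
  · exact Fl_mem h hy
  · rw [show a + 1 = N by omega, D.FN, zero_mul]; exact zero_mem _

lemma Data.N2 (D : Data N M q E F g c) : 2 ≤ N := by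
  have := D.hN; have := D.hM; omega

lemma Data.qM (D : Data N M q E F g c) (i : ℕ) : (q ^ (2 * i)) ^ M = 1 := by
  rw [← pow_mul, show 2 * i * M = N * i by rw [D.hN]; ring, pow_mul, D.hq.pow_eq_one, one_pow]

lemma sgn2 (j : ℕ) : ((-1 : k) ^ j) ^ 2 = 1 := by rw [← pow_mul, mul_comm, pow_mul]; simp

lemma Data.BB_ee (D : Data N M q E F g c) {κ ε : k} (h1 : κ ^ M = 1) (h2 : ε ^ 2 = 1) :
    ee M g c κ ε ∈ BB N M k E g c :=
  Submodule.subset_span ⟨0, κ, ε, by have := D.N2; omega, h1, h2, by simp⟩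

/-- closure under the generators gives closure under everything -/
lemma Data.gen_ind (D : Data N M q E F g c) {S : Submodule k A}
    (hg : ∀ y ∈ S, g * y ∈ S) (hc : ∀ y ∈ S, c * y ∈ S) (hE : ∀ y ∈ S, E * y ∈ S)
    (hF : ∀ y ∈ S, F * y ∈ S) (x : A) {y : A} (hy : y ∈ S) : x * y ∈ S := by
  have hx : x ∈ Algebra.adjoin k {g, c, E, F} := by rw [D.gen]; trivial
  induction hx using Algebra.adjoin_induction generalizing y with
  | mem x hx =>
    rcases hx with rfl | rfl | rfl | rfl
    · exact hg y hy
    · exact hc y hy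
    · exact hE y hy
    · exact hF y hy
  | algebraMap r => rw [← Algebra.smul_def]; exact S.smul_mem _ hy
  | add x x' _ _ h h' => rw [add_mul]; exact S.add_mem (h hy) (h' hy)
  | mul x x' _ _ h h' => rw [mul_assoc]; exact h (h' hy)

lemma Data.Fl_top (D : Data N M q E F g c) (x : A) : x ∈ Fl N N M k E F g c := by
  rw [← mul_one x]
  refine D.gen_ind (fun _ => D.Fl_g) (fun _ => D.Fl_c) (fun _ => D.Fl_E) (fun _ => D.Fl_F) x ?_
  rw [← ee_sum (g := g) (c := c) D.hN D.hM D.hq]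
  refine Submodule.sum_mem _ fun i _ => Submodule.sum_mem _ fun j _ => ?_
  have := Fl_mem (F := F) (a := 0) (r := N) (by have := D.N2; omega)
    (D.BB_ee (D.qM i) (sgn2 (k := k) j))
  simpa using this

lemma Data.split (D : Data N M q E F g c) (x : A) :
    ∃ p ∈ Fl (N - 1) N M k E F g c, ∃ y ∈ BB N M k E g c, x = p + F ^ (N - 1) * y := by
  have h : x ∈ Fl (N - 1) N M k E F g c ⊔
      (BB N M k E g c).map (LinearMap.mulLeft k (F ^ (N - 1))) := by
    refine Fl_ind (f := LinearMap.id) ?_ (D.Fl_top x)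
    intro a y ha hy
    rcases Nat.lt_or_ge a (N - 1) with h | h
    · exact Submodule.mem_sup_left (Fl_mem h hy)
    · obtain rfl : a = N - 1 := by omega
      exact Submodule.mem_sup_right ⟨y, hy, rfl⟩
  obtain ⟨p, hp, z, ⟨y, hy, rfl⟩, h2⟩ := Submodule.mem_sup.mp h
  exact ⟨p, hp, y, hy, h2.symm⟩

lemma Data.weight (D : Data N M q E F g c) {κ ε : k} (h1 : κ ^ M = 1) (h2 : ε ^ 2 = 1) :
    ∃ i j : ℕ, i < M ∧ j < 2 ∧ κ = q ^ (2 * i) ∧ ε = (-1) ^ j := by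
  have := D.hM
  have hq2 : IsPrimitiveRoot (q ^ 2) M := D.hq.pow (by have := D.N2; omega) D.hN
  have : NeZero M := ⟨D.hM.ne'⟩
  obtain ⟨i, hi, h⟩ := hq2.eq_pow_of_pow_eq_one h1
  rcases mul_self_eq_one_iff.mp ((pow_two ε).symm.trans h2) with h3 | h3
  · exact ⟨i, 0, hi, by omega, by rw [pow_mul, h], by simp [h3]⟩
  · exact ⟨i, 1, hi, by omega, by rw [pow_mul, h], by simp [h3]⟩

lemma Data.F_inj (D : Data N M q E F g c) {p : A} (hp : p ∈ Fl (N - 1) N M k E F g c)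
    (h : F * p = 0) : p = 0 := by
  let v : Fin (N - 1) × Fin N × Fin M × Fin 2 → A := fun x =>
    F ^ (x.1 : ℕ) * (E ^ (x.2.1 : ℕ) * ee M g c (q ^ (2 * (x.2.2.1 : ℕ))) ((-1) ^ (x.2.2.2 : ℕ)))
  have hv : p ∈ Submodule.span k (Set.range v) := by
    refine Fl_ind (f := LinearMap.id) ?_ hp
    intro a y ha hy
    refine BB_ind (f := LinearMap.mulLeft k (F ^ a)) ?_ hy
    intro b κ ε hb hκ hε
    obtain ⟨i, j, hi, hj, rfl, rfl⟩ := D.weight hκ hε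
    exact Submodule.subset_span ⟨(⟨a, ha⟩, ⟨b, hb⟩, ⟨i, hi⟩, ⟨j, hj⟩), rfl⟩
  have hli : LinearIndependent k (LinearMap.mulLeft k F ∘ v) := by
    have := D.li.comp (fun x : Fin (N - 1) × Fin N × Fin M × Fin 2 =>
      ((⟨x.1 + 1, by omega⟩ : Fin N), x.2)) (by
        rintro ⟨⟨a, ha⟩, x⟩ ⟨⟨b, hb⟩, y⟩ h
        simpa using h)
    convert this using 1
    funext x
    simp only [Function.comp, LinearMap.mulLeft_apply, v]
    rw [← mul_assoc, ← pow_succ']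
  exact Submodule.disjoint_def.mp (Submodule.range_ker_disjoint hli) p hv
    (by simpa using h)

lemma Data.ker (D : Data N M q E F g c) {x : A} (h : F * x = 0) :
    ∃ y ∈ BB N M k E g c, x = F ^ (N - 1) * y := by
  obtain ⟨p, hp, y, hy, rfl⟩ := D.split x
  have hFF : F * (F ^ (N - 1) * y) = 0 := by
    rw [← mul_assoc, ← pow_succ', show N - 1 + 1 = N by have := D.N2; omega, D.FN, zero_mul]
  rw [mul_add, hFF, add_zero] at h
  exact ⟨y, hy, by rw [D.F_inj hp h, zero_add]⟩

lemma Data.lead (D : Data N M q E F g c) (m : ℕ) {y : A} (hy : y ∈ BB N M k E g c) :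
    E ^ m * (F ^ (N - 1) * y) - (q ^ (N - 1)) ^ m • (F ^ (N - 1) * (E ^ m * y)) ∈
      Fl (N - 1) N M k E F g c ∧ E ^ m * y ∈ BB N M k E g c := by
  induction m with
  | zero => simpa using hy
  | succ m ih =>
    refine ⟨?_, by rw [pow_succ', mul_assoc]; exact D.BB_E ih.2⟩
    have h1 := D.Fl_E ih.1
    have h2 := Submodule.smul_mem _ ((q ^ (N - 1)) ^ m) (D.EFy (F := F) (le_refl (N - 1)) ih.2)
    have h3 := Submodule.add_mem _ h1 h2
    convert h3 using 1
    simp only [mul_sub, mul_smul_comm, pow_succ', mul_assoc, smul_sub, smul_smul]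
    rw [sub_add_sub_cancel, mul_comm]

/-- `E^(r+1) α` is a multiple of `F^(N-1) E^(r+1) e`. -/
lemma Data.lead_eq (D : Data N M q E F g c) (m : ℕ) {y : A} (hy : y ∈ BB N M k E g c)
    (h : F * (E ^ m * (F ^ (N - 1) * y)) = 0) :
    E ^ m * (F ^ (N - 1) * y) = (q ^ (N - 1)) ^ m • (F ^ (N - 1) * (E ^ m * y)) := by
  refine sub_eq_zero.mp (D.F_inj (D.lead m hy).1 ?_)
  rw [mul_sub, h, mul_smul_comm, ← mul_assoc F, ← pow_succ',
    show N - 1 + 1 = N by have := D.N2; omega, D.FN]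
  simp

lemma Data.EFU (D : Data N M q E F g c) (m a : ℕ) (x : A) :
    ∃ y, E ^ m * (F ^ (a + m) * x) = F ^ a * y := by
  induction m generalizing a with
  | zero => exact ⟨x, by simp⟩
  | succ m ih =>
    obtain ⟨y, hy⟩ := ih (a + 1)
    rw [show a + 1 + m = a + (m + 1) by ring] at hy
    rw [pow_succ', mul_assoc, hy, ← mul_assoc, D.hEF]
    refine ⟨q ^ (a + 1) • (F * (E * y)) - (q * gn q (a + 1)) • ((1 - q ^ a • g) * y), ?_⟩
    rw [sub_mul, mul_sub (F ^ a) (_ • _), mul_smul_comm _ (F ^ a), mul_smul_comm _ (F ^ a),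
      smul_mul_assoc, smul_mul_assoc, pow_succ F]
    simp only [mul_assoc]

lemma Data.exists_gam (D : Data N M q E F g c) {r : ℕ} (hr : r + 2 ≤ N) (x : A) :
    ∃! y, y ∈ Fl (N - 1) N M k E F g c ∧ F * y = E ^ r * (F ^ (N - 1) * x) := by
  obtain ⟨y, hy⟩ := D.EFU r (N - 1 - r) x
  rw [show N - 1 - r + r = N - 1 by omega, show N - 1 - r = N - 2 - r + 1 by omega, pow_succ',
    mul_assoc] at hy
  obtain ⟨p, hp, z, -, hz⟩ := D.split (F ^ (N - 2 - r) * y)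
  have hFp : F * p = E ^ r * (F ^ (N - 1) * x) := by
    rw [hy, hz, mul_add, ← mul_assoc F (F ^ _), ← pow_succ', show N - 1 + 1 = N by omega, D.FN]
    simp
  refine ⟨p, ⟨hp, hFp⟩, ?_⟩
  rintro p' ⟨hp', h'⟩
  refine sub_eq_zero.mp (D.F_inj (Submodule.sub_mem _ hp' hp) ?_)
  rw [mul_sub, h', hFp, sub_self]

end data

section main
variable {k A : Type} [Field k] [CharZero k] [Ring A] [Algebra k A] {N M : ℕ} {q : k}
  {E F g c : A}

/-- the properties of `γ_{2i,j}` used -/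
structure Gm (N M : ℕ) (q : k) (E F g c : A) (i j : ℕ) (y : A) : Prop where
  mem : y ∈ Fl (N - 1) N M k E F g c
  hF : F * y = E ^ (2 * i - 2) * (F ^ (N - 1) * ee M g c (q ^ (2 * i)) ((-1) ^ j))

lemma Data.Fal (D : Data N M q E F g c) (x : A) : F * (F ^ (N - 1) * x) = 0 := by
  rw [← mul_assoc, ← pow_succ', show N - 1 + 1 = N by have := D.N2; omega, D.FN, zero_mul]

lemma Data.gal (D : Data N M q E F g c) {i : ℕ} (hi : 1 ≤ i) (ε : k) :
    g * (F ^ (N - 1) * ee M g c (q ^ (2 * i)) ε)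
      = q ^ (2 * i - 2) • (F ^ (N - 1) * ee M g c (q ^ (2 * i)) ε) := by
  rw [D.gFx (ee_g D.gM (D.qM i) D.hM)]
  congr 1
  obtain ⟨i, rfl⟩ : ∃ l, i = l + 1 := ⟨i - 1, by omega⟩
  obtain ⟨L, hL⟩ : ∃ L, N = L + 1 := ⟨N - 1, by have := D.N2; omega⟩
  have h1 : q ^ (2 * (L + 1)) = 1 := by rw [← hL, mul_comm, pow_mul, D.hq.pow_eq_one, one_pow]
  rw [hL, show 2 * (i + 1) - 2 = 2 * i by omega, show L + 1 - 1 = L by omega, ← pow_mul, ← pow_add,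
    show 2 * L + 2 * (i + 1) = 2 * (L + 1) + 2 * i by ring, pow_add, h1, one_mul]

lemma Data.cal (D : Data N M q E F g c) {κ ε : k} (hε : ε ^ 2 = 1) :
    c * (F ^ (N - 1) * ee M g c κ ε) = ((-1) ^ (N - 1) * ε) • (F ^ (N - 1) * ee M g c κ ε) :=
  D.cFx (ee_c D.gc D.cc hε) _

lemma Data.ggam (D : Data N M q E F g c) {i j : ℕ} (hi : 1 ≤ i) (hi2 : i ≤ M) {y : A}
    (h : Gm N M q E F g c i j y) : g * y = q ^ (N - 2 * i) • y := by
  have hN := D.hN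
  refine sub_eq_zero.mp (D.F_inj (Submodule.sub_mem _ (D.Fl_g h.mem)
    (Submodule.smul_mem _ _ h.mem)) ?_)
  have hFg : F * g = (q ^ 2)⁻¹ • (g * F) := by
    rw [D.gF, smul_smul, inv_mul_cancel₀ (pow_ne_zero 2 D.q0), one_smul]
  rw [mul_sub, ← mul_assoc, hFg, smul_mul_assoc, mul_assoc, mul_smul_comm, h.hF,
    D.gEx (D.gal hi _), smul_smul, ← sub_smul]
  convert zero_smul k _
  rw [sub_eq_zero]
  have hq0 := D.q0
  obtain ⟨i, rfl⟩ : ∃ l, i = l + 1 := ⟨i - 1, by omega⟩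
  obtain ⟨L, hL⟩ : ∃ L, N = L + 2 * (i + 1) := ⟨N - 2 * (i + 1), by omega⟩
  have h1 : q ^ (L + 2 * (i + 1)) = 1 := by rw [← hL, D.hq.pow_eq_one]
  rw [hL, show 2 * (i + 1) - 2 = 2 * i by omega, Nat.add_sub_cancel, inv_pow]
  have h2 : (q ^ 2 * (q ^ 2) ^ (2 * i)) ≠ 0 := by exact mul_ne_zero (pow_ne_zero _ hq0) (pow_ne_zero _ (pow_ne_zero _ hq0))
  rw [← mul_assoc, ← mul_inv]
  rw [inv_mul_eq_iff_eq_mul₀ h2]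
  calc q ^ (2 * i) = q ^ (L + 2 * (i + 1)) * q ^ (2 * i) := by rw [h1, one_mul]
    _ = _ := by ring

lemma Data.cgam (D : Data N M q E F g c) {i j : ℕ} {y : A}
    (h : Gm N M q E F g c i j y) : ∃ s : k, c * y = s • y := by
  refine ⟨-((-1) ^ (2 * i - 2) * ((-1) ^ (N - 1) * (-1) ^ j)), ?_⟩
  refine sub_eq_zero.mp (D.F_inj (Submodule.sub_mem _ (D.Fl_c h.mem)
    (Submodule.smul_mem _ _ h.mem)) ?_)
  have hFg : F * c = -(c * F) := by rw [D.cF, neg_neg]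
  rw [mul_sub, ← mul_assoc, hFg, neg_mul, mul_assoc, mul_smul_comm, h.hF,
    D.cEx (D.cal (sgn2 j))]
  module

/-- `k`-span description of `P`. -/
lemma Data.P_span (D : Data N M q E F g c) {i j : ℕ} (hi : 1 ≤ i) (hi2 : i ≤ M) {y : A}
    (h : Gm N M q E F g c i j y) (x : A) :
    x * y ∈ Submodule.span k (Set.range (fun t : Fin N × Fin 2 => E ^ (t.1 : ℕ) *
      (if t.2 = 0 then F ^ (N - 1) * ee M g c (q ^ (2 * i)) ((-1) ^ j) else y))) := by
  set al := F ^ (N - 1) * ee M g c (q ^ (2 * i)) ((-1) ^ j) with hal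
  set S := Submodule.span k (Set.range (fun t : Fin N × Fin 2 => E ^ (t.1 : ℕ) *
      (if t.2 = 0 then al else y))) with hS
  have hN := D.hN
  have ha : ∀ s, E ^ s * al ∈ S := by
    intro s
    rcases Nat.lt_or_ge s N with h | h
    · exact Submodule.subset_span ⟨(⟨s, h⟩, 0), by simp⟩
    · rw [pow_eq_zero_of_le h D.EN, zero_mul]; exact zero_mem _
  have hy : ∀ s, E ^ s * y ∈ S := by
    intro s
    rcases Nat.lt_or_ge s N with h | h
    · exact Submodule.subset_span ⟨(⟨s, h⟩, 1), by simp⟩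
    · rw [pow_eq_zero_of_le h D.EN, zero_mul]; exact zero_mem _
  have hind : ∀ (z : A), (∀ s, z * (E ^ s * al) ∈ S) → (∀ s, z * (E ^ s * y) ∈ S) →
      ∀ w ∈ S, z * w ∈ S := by
    intro z h1 h2 w hw
    have : S ≤ S.comap (LinearMap.mulLeft k z) := by
      conv_lhs => rw [hS]
      refine Submodule.span_le.mpr ?_
      rintro _ ⟨t, rfl⟩
      by_cases ht : t.2 = 0
      · simpa [ht] using h1 t.1
      · simpa [ht] using h2 t.1
    exact this hw
  obtain ⟨s, hs⟩ := D.cgam h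
  refine D.gen_ind (hind g ?_ ?_) (hind c ?_ ?_) (hind E ?_ ?_) (hind F ?_ ?_) x
    (by simpa using hy 0)
  · intro s; rw [D.gEx (D.gal hi _)]; exact S.smul_mem _ (ha _)
  · intro s; rw [D.gEx (D.ggam hi hi2 h)]; exact S.smul_mem _ (hy _)
  · intro s; rw [D.cEx (D.cal (sgn2 j))]; exact S.smul_mem _ (ha _)
  · intro s; rw [D.cEx hs]; exact S.smul_mem _ (hy _)
  · intro s; rw [← mul_assoc, ← pow_succ']; exact ha _
  · intro s; rw [← mul_assoc, ← pow_succ']; exact hy _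
  · intro s
    cases s with
    | zero => rw [pow_zero, one_mul, D.Fal]; exact zero_mem _
    | succ s =>
      rw [D.FEx (D.gal hi _), D.Fal, mul_zero, smul_zero, zero_add]
      exact S.smul_mem _ (ha _)
  · intro s
    cases s with
    | zero => rw [pow_zero, one_mul, h.hF]; exact ha _
    | succ s =>
      rw [D.FEx (D.ggam hi hi2 h), h.hF, ← hal, ← mul_assoc, ← pow_add]
      exact S.add_mem (S.smul_mem _ (ha _)) (S.smul_mem _ (hy _))

/-- index type -/
abbrev TT (N M : ℕ) := {t : ℕ × ℕ × ℕ // 1 ≤ t.1 ∧ t.1 ≤ M ∧ t.2.1 ≤ 1 ∧ t.2.2 ≤ N - 2 * t.1}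

/-- the summands -/
abbrev PE (E : A) (γ : ℕ → ℕ → A) (t : ℕ × ℕ × ℕ) : Submodule A A :=
  Submodule.map (LinearMap.toSpanSingleton A A (E ^ t.2.2)) (Submodule.span A {γ t.1 t.2.1})

lemma PE_mem (E : A) (γ : ℕ → ℕ → A) (t : ℕ × ℕ × ℕ) (x : A) :
    x * γ t.1 t.2.1 * E ^ t.2.2 ∈ PE E γ t :=
  ⟨x * γ t.1 t.2.1, Submodule.smul_mem _ x (Submodule.mem_span_singleton_self _), rfl⟩

lemma Data.weight' (D : Data N M q E F g c) {κ ε : k} (h1 : κ ^ M = 1) (h2 : ε ^ 2 = 1) :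
    ∃ i j : ℕ, 1 ≤ i ∧ i ≤ M ∧ j ≤ 1 ∧ κ = q ^ (2 * i) ∧ ε = (-1) ^ j := by
  obtain ⟨i, j, hi, hj, rfl, rfl⟩ := D.weight h1 h2
  rcases Nat.eq_zero_or_pos i with rfl | h
  · exact ⟨M, j, D.hM, le_rfl, by omega, by rw [← D.hN, D.hq.pow_eq_one]; simp, rfl⟩
  · exact ⟨i, j, h, hi.le, by omega, rfl, rfl⟩

lemma Data.sup_top (D : Data N M q E F g c) {γ : ℕ → ℕ → A}
    (hγ : ∀ i j, 1 ≤ i → i ≤ M → j ≤ 1 → Gm N M q E F g c i j (γ i j)) :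
    (⨆ t : TT N M, PE E γ t.1) = ⊤ := by
  set S := ⨆ t : TT N M, PE E γ t.1 with hS
  have hN := D.hN
  have hmem : ∀ t : TT N M, ∀ x : A, x * γ t.1.1 t.1.2.1 * E ^ t.1.2.2 ∈ S := fun t x =>
    (le_iSup (fun t : TT N M => PE E γ t.1) t) (PE_mem E γ t.1 x)
  let S' : Submodule k A := (S.restrictScalars k).map (LinearMap.mulLeft k (F ^ (N - 1)))
  have key : ∀ x, F * x = 0 → x ∈ S' := by
    intro x hx
    obtain ⟨y, hy, rfl⟩ := D.ker hx
    refine BB_ind (f := LinearMap.mulLeft k (F ^ (N - 1))) ?_ hy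
    intro b κ ε hb hκ hε
    rw [LinearMap.mulLeft_apply, D.epow]
    obtain ⟨i, j, hi, hi2, hj, e1, e2⟩ := D.weight' (κ := (q ^ 2)⁻¹ ^ b * κ) (ε := (-1) ^ b * ε)
      (by rw [mul_pow, hκ, mul_one, ← pow_mul, mul_comm b M, pow_mul, inv_pow, ← pow_mul,
            ← hN, D.hq.pow_eq_one]; simp)
      (by rw [mul_pow, hε, sgn2, one_mul])
    rw [e1, e2]
    have hres : ∀ (C : k) (u v : A), C ≠ 0 → u ∈ S → F ^ (N - 1) * u = C • v → v ∈ S' := by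
      intro C u v hC hu huv
      have : C • v ∈ S' := ⟨u, hu, huv⟩
      have h2 := S'.smul_mem C⁻¹ this
      rwa [smul_smul, inv_mul_cancel₀ hC, one_smul] at h2
    rcases Nat.lt_or_ge (N - 2 * i) b with hb2 | hb2
    · obtain ⟨i', hi'⟩ : ∃ i', i' = M + 1 - i := ⟨_, rfl⟩
      have G := hγ i' (1 - j) (by omega) (by omega) (by omega)
      obtain ⟨C, hC, h⟩ := D.top2 (r := 2 * i' - 2) (by omega) (D.gal (by omega) _) (D.Fal _)
        (by rw [D.ggam (by omega) (by omega) G]; congr 2; omega) G.hF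
      have hl := D.lead_eq (2 * i' - 2 + 1)
        (D.BB_ee (κ := q ^ (2 * i')) (ε := (-1) ^ (1 - j)) (D.qM _) (sgn2 _))
        (by rw [D.FEx (D.gal (by omega) _), D.Fal, cfn_self D.q0]; simp)
      rw [hl, smul_smul, D.epow] at h
      refine hres (C * (q ^ (N - 1)) ^ (2 * i' - 2 + 1)) _ _ ?_ (hmem ⟨(i', 1 - j, b - (2 * i' - 1)), by
        refine ⟨?_, ?_, ?_, ?_⟩ <;> simp only <;> omega⟩ (E ^ (N - 1))) ?_
      · exact mul_ne_zero hC (pow_ne_zero _ (pow_ne_zero _ D.q0))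
      · simp only
        rw [← mul_assoc, h, smul_mul_assoc, mul_assoc, mul_assoc, ← pow_add E,
          show 2 * i' - 2 + 1 + (b - (2 * i' - 1)) = b by omega]
        congr 4
        · rw [inv_pow, inv_mul_eq_iff_eq_mul₀ (pow_ne_zero _ (pow_ne_zero _ D.q0)), ← pow_mul,
            ← pow_add, show 2 * (2 * i' - 2 + 1) + 2 * i = N + 2 * i' by omega, pow_add,
            D.hq.pow_eq_one, one_mul]
        · rw [← pow_add]
          rcases Nat.le_one_iff_eq_zero_or_eq_one.mp hj with rfl | rfl
          · rw [show 2 * i' - 2 + 1 + (1 - 0) = 2 * i' by omega, pow_mul]; simp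
          · rw [show 2 * i' - 2 + 1 + (1 - 1) = 2 * (i' - 1) + 1 by omega, pow_succ, pow_mul]; simp
    · have G := hγ i j hi hi2 hj
      obtain ⟨C, hC, h⟩ := D.top1 (r := 2 * i - 2) (by omega) (D.gal hi _) (D.Fal _)
        (by rw [D.ggam hi hi2 G]; congr 2; omega) G.hF
      refine hres C _ _ hC (hmem ⟨(i, j, b), hi, hi2, hj, hb2⟩ (E ^ (N - 2 - (2 * i - 2)))) ?_
      simp only
      rw [← mul_assoc, h, smul_mul_assoc, mul_assoc]
  have main : ∀ r, r ≤ N → ∀ x, F ^ r * x = 0 → x ∈ S := by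
    intro r
    induction r with
    | zero => intro _ x hx; rw [pow_zero, one_mul] at hx; rw [hx]; exact zero_mem _
    | succ r ih =>
      intro hr x hx
      obtain ⟨m, hm, h⟩ := key (F ^ r * x) (by rw [← mul_assoc, ← pow_succ', hx])
      rw [LinearMap.mulLeft_apply, show N - 1 = r + (N - 1 - r) by omega, pow_add, mul_assoc] at h
      have h2 := ih (by omega) (x - F ^ (N - 1 - r) * m) (by rw [mul_sub, h, sub_self])
      have h3 : F ^ (N - 1 - r) * m ∈ S := S.smul_mem _ hm
      simpa using S.add_mem h2 h3
  refine eq_top_iff.mpr fun x _ => main N le_rfl x (by rw [D.FN, zero_mul])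

lemma TT_finite (N M : ℕ) : Finite (TT N M) := by
  refine Set.Finite.subset (s := (Finset.range (M + 1) ×ˢ Finset.range 2 ×ˢ Finset.range (N + 1) :
    Finset (ℕ × ℕ × ℕ))) (Finset.finite_toSet _) ?_
  rintro ⟨i, j, h⟩ ⟨h1, h2, h3, h4⟩
  simp at *
  omega

lemma TT_card {N M : ℕ} (hN : N = 2 * M) : Nat.card (TT N M) ≤ 2 * M ^ 2 := by
  let f : TT N M → (Σ i : Fin M, Fin 2 × Fin (2 * (M - i) - 1)) := fun t =>
    ⟨⟨t.1.1 - 1, by have := t.2; omega⟩, ⟨t.1.2.1, by have := t.2; omega⟩,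
      ⟨t.1.2.2, by have := t.2; simp only; omega⟩⟩
  have hf : Function.Injective f := by
    rintro ⟨⟨i, j, h⟩, h1, h2, h3, h4⟩ ⟨⟨i', j', h'⟩, h1', h2', h3', h4'⟩ hh
    simp only [f, Sigma.mk.injEq, Fin.mk.injEq] at hh h1 h1'
    obtain ⟨e1, e2⟩ := hh
    obtain rfl : i = i' := by omega
    simpa using e2
  refine (Nat.card_le_card_of_injective f hf).trans ?_
  rw [Nat.card_eq_fintype_card, Fintype.card_sigma]
  simp only [Fintype.card_prod, Fintype.card_fin]
  rw [Fin.sum_univ_eq_sum_range (fun i => 2 * (2 * (M - i) - 1)) M, ← Finset.sum_range_reflect]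
  have : ∀ L, ∑ i ∈ Finset.range L, 2 * (2 * i + 1) = 2 * L ^ 2 := by
    intro L
    induction L with
    | zero => simp
    | succ L ih => rw [Finset.sum_range_succ, ih]; ring
  rw [← this M]
  refine Finset.sum_le_sum fun i hi => ?_
  rw [Finset.mem_range] at hi
  omega

theorem Data.internal (D : Data N M q E F g c) {γ : ℕ → ℕ → A}
    (hγ : ∀ i j, 1 ≤ i → i ≤ M → j ≤ 1 → Gm N M q E F g c i j (γ i j)) :
    DirectSum.IsInternal (fun t : TT N M => PE E γ t.1) := by
  classical
  have := TT_finite N M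
  have : Fintype (TT N M) := Fintype.ofFinite _
  have hdim : ∀ t : TT N M, ∃ _ : Module.Finite k (PE E γ t.1),
      Module.finrank k (PE E γ t.1) ≤ 2 * N := by
    rintro ⟨⟨i, j, h⟩, h1, h2, h3, h4⟩
    simp only at h1 h2 h3 h4
    let S0 : Submodule k A := Submodule.span k (Set.range (fun t : Fin N × Fin 2 => E ^ (t.1 : ℕ) *
      (if t.2 = 0 then F ^ (N - 1) * ee M g c (q ^ (2 * i)) ((-1) ^ j) else γ i j)))
    have hS0 : Module.Finite k S0 := FiniteDimensional.span_of_finite k (Set.finite_range _)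
    let S : Submodule k A := S0.map (LinearMap.mulRight k (E ^ h))
    have hSf : Module.Finite k S := Module.Finite.map _ _
    have hle : (PE E γ (i, j, h)).restrictScalars k ≤ S := by
      rintro _ ⟨y, hy, rfl⟩
      obtain ⟨x, rfl⟩ := Submodule.mem_span_singleton.mp hy
      exact ⟨_, D.P_span h1 h2 (hγ i j h1 h2 h3) x, rfl⟩
    have hS : Module.finrank k S ≤ 2 * N := by
      refine (Submodule.finrank_map_le _ _).trans ?_
      refine (finrank_range_le_card _).trans ?_
      simp [mul_comm]
    have hfin : Module.Finite k ((PE E γ (i, j, h)).restrictScalars k) :=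
      Submodule.finiteDimensional_of_le hle
    exact ⟨hfin, (Submodule.finrank_mono hle).trans hS⟩
  have hfin : ∀ t : TT N M, Module.Finite k (PE E γ t.1) := fun t => (hdim t).1
  have hrank : ∀ t : TT N M, Module.finrank k (PE E γ t.1) ≤ 2 * N := fun t => (hdim t).2
  let f := (DirectSum.coeLinearMap (fun t : TT N M => PE E γ t.1)).restrictScalars k
  have hsurj : Function.Surjective f := by
    have h := D.sup_top hγ
    rw [← DirectSum.range_coeLinearMap] at h
    exact fun x => LinearMap.range_eq_top.mp h x
  have hA : Module.Finite k A := Module.Finite.of_surjective f hsurj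
  have hA2 := D.li.fintype_card_le_finrank
  have hd : Module.finrank k (DirectSum (TT N M) (fun t => PE E γ t.1)) ≤ Module.finrank k A := by
    rw [Module.finrank_directSum]
    refine (Finset.sum_le_sum fun t _ => hrank t).trans ?_
    refine le_trans ?_ hA2
    simp only [Finset.sum_const, smul_eq_mul, Fintype.card_prod, Fintype.card_fin, Finset.card_univ]
    rw [← Nat.card_eq_fintype_card]
    calc _ ≤ 2 * M ^ 2 * (2 * N) := Nat.mul_le_mul_right _ (TT_card D.hN)
      _ = N * (N * (M * 2)) := by rw [D.hN]; ring
  have heq := le_antisymm hd (LinearMap.finrank_le_finrank_of_surjective hsurj)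
  exact ⟨(LinearMap.injective_iff_surjective_of_finrank_eq_finrank heq).mpr hsurj, hsurj⟩

end main

section rep
variable {k : Type} [Field k]

/-- The basis vectors. -/
def X (a b : ℕ) : (ℕ × ℕ →₀ k) := Finsupp.single (a, b) 1

/-- linear map determined by images of basis vectors -/
def op (f : ℕ → ℕ → (ℕ × ℕ →₀ k)) : Module.End k (ℕ × ℕ →₀ k) :=
  Finsupp.linearCombination k (fun t : ℕ × ℕ => f t.1 t.2)

lemma op_X (f : ℕ → ℕ → (ℕ × ℕ →₀ k)) (a b : ℕ) : op f (X a b) = f a b := by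
  simp [op, X]

lemma ext_X {f h : Module.End k (ℕ × ℕ →₀ k)} (H : ∀ a b, f (X a b) = h (X a b)) : f = h := by
  refine Finsupp.lhom_ext' fun t => LinearMap.ext_ring ?_
  exact H t.1 t.2

/-- weights -/
def wt (z x y : k) (a b : ℕ) : k := z * x ^ b * y ^ a

/-- diagonal operator -/
def dg (z x y : k) : Module.End k (ℕ × ℕ →₀ k) := op (fun a b => wt z x y a b • X a b)

/-- `F` -/
def opF (N : ℕ) : Module.End k (ℕ × ℕ →₀ k) :=
  op (fun a b => if N ∣ a + 1 then 0 else X (a + 1) b)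

/-- shift in `b` -/
def up (N a b : ℕ) : (ℕ × ℕ →₀ k) := if N ∣ b + 1 then 0 else X a (b + 1)

/-- coefficient -/
def co (q κ : k) (a b : ℕ) : k := gn q a * (q - q ^ a * (κ * (q ^ 2)⁻¹ ^ b))

/-- `E` -/
def opE (N : ℕ) (q κ : k) : Module.End k (ℕ × ℕ →₀ k) :=
  op (fun a b => q ^ a • up N a b - co q κ a b • X (a - 1) b)

lemma dg_X (z x y : k) (a b : ℕ) : dg z x y (X a b) = wt z x y a b • X a b := op_X _ _ _

lemma opF_X (N a b : ℕ) :
    opF N (X a b : ℕ × ℕ →₀ k) = if N ∣ a + 1 then 0 else X (a + 1) b := op_X _ _ _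

lemma opE_X (N : ℕ) (q κ : k) (a b : ℕ) :
    opE N q κ (X a b) = q ^ a • up N a b - co q κ a b • X (a - 1) b := op_X _ _ _

lemma dg_pow_X (z x y : k) (m a b : ℕ) :
    (dg z x y ^ m) (X a b) = wt z x y a b ^ m • X a b := by
  induction m with
  | zero => simp
  | succ m ih => rw [pow_succ, Module.End.mul_apply, dg_X, map_smul, ih, smul_smul, pow_succ']

lemma gn_zero {N : ℕ} {q : k} (hq : IsPrimitiveRoot q N) (hN : 2 ≤ N) {a : ℕ} (h : N ∣ a) :
    gn q a = 0 := by
  have h1 := gn_mul q a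
  rw [(hq.pow_eq_one_iff_dvd a).mpr h, sub_self] at h1
  rcases mul_eq_zero.mp h1 with h2 | h2
  · exact absurd (sub_eq_zero.mp h2) (hq.ne_one (by omega))
  · exact h2

lemma co_zero {N : ℕ} {q : k} (hq : IsPrimitiveRoot q N) (hN : 2 ≤ N) (κ : k) {a : ℕ}
    (h : N ∣ a) (b : ℕ) : co q κ a b = 0 := by
  unfold co; rw [gn_zero hq hN h, zero_mul]

lemma coF {N : ℕ} {q : k} (hq : IsPrimitiveRoot q N) (hN : 2 ≤ N) (κ : k) (a b : ℕ) :
    co q κ a b • opF N (X (a - 1) b : ℕ × ℕ →₀ k) = co q κ a b • (X a b : ℕ × ℕ →₀ k) := by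
  by_cases h : N ∣ a
  · rw [co_zero hq hN κ h, zero_smul, zero_smul]
  · have ha : a ≠ 0 := by rintro rfl; simp at h
    rw [opF_X, show a - 1 + 1 = a by omega, if_neg h]

lemma co_rec {q : k} (hq : q ≠ 0) (κ : k) (a b : ℕ) :
    q⁻¹ * co q κ (a + 1) b - co q κ a b = 1 - wt κ (q ^ 2)⁻¹ (q ^ 2) a b := by
  unfold co wt
  have h1 := gn_succ q a
  have h2 := gn_succ' q a
  have h3 : q * gn q a + 1 - gn q a = q ^ a := by rw [add_comm, ← h2, h1]; ring
  have h4 : (q ^ 2) ^ a = q ^ a * q ^ a := by rw [← pow_mul, two_mul, pow_add]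
  rw [h4, h2, pow_succ]
  have : q⁻¹ * ((1 + q * gn q a) * (q - q ^ a * q * (κ * (q ^ 2)⁻¹ ^ b)))
    = (1 + q * gn q a) * (1 - q ^ a * (κ * (q ^ 2)⁻¹ ^ b)) := by
    have : q - q ^ a * q * (κ * (q ^ 2)⁻¹ ^ b) = q * (1 - q ^ a * (κ * (q ^ 2)⁻¹ ^ b)) := by ring
    rw [this]; field_simp
  rw [this]
  linear_combination (-(q ^ a * (κ * (q ^ 2)⁻¹ ^ b))) * h3

lemma rel_FE {N : ℕ} {q : k} (hq : IsPrimitiveRoot q N) (hN : 2 ≤ N) (κ : k) :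
    opF N * opE N q κ = q⁻¹ • (opE N q κ * opF N) + (1 - dg κ (q ^ 2)⁻¹ (q ^ 2)) := by
  have hq0 : q ≠ 0 := hq.ne_zero (by omega)
  refine ext_X fun a b => ?_
  simp only [Module.End.mul_apply, LinearMap.add_apply, LinearMap.sub_apply, LinearMap.smul_apply,
    Module.End.one_apply, dg_X]
  rw [opE_X, map_sub, map_smul, map_smul, coF hq hN]
  have h := co_rec hq0 κ a b
  have h2 : (X a b : ℕ × ℕ →₀ k) - wt κ (q ^ 2)⁻¹ (q ^ 2) a b • X a b
      = (q⁻¹ * co q κ (a + 1) b - co q κ a b) • X a b := by rw [h]; module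
  rw [h2, opF_X]
  by_cases ha : N ∣ a + 1
  · rw [if_pos ha, co_zero hq hN κ ha]
    have : opF N (up N a b : ℕ × ℕ →₀ k) = 0 := by
      unfold up; split_ifs
      · simp
      · rw [opF_X, if_pos ha]
    rw [this]
    simp
  · rw [if_neg ha, opE_X, Nat.add_sub_cancel]
    have : opF N (up N a b : ℕ × ℕ →₀ k) = up N (a + 1) b := by
      unfold up; split_ifs
      · simp
      · rw [opF_X, if_neg ha]
    rw [this]
    have h3 : q⁻¹ * q ^ (a + 1) = q ^ a := by rw [pow_succ]; field_simp
    rw [smul_sub, smul_smul, smul_smul, h3]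
    module

lemma rel_dgF {N : ℕ} (z x y : k) : dg z x y * opF N = y • (opF N * dg z x y) := by
  refine ext_X fun a b => ?_
  simp only [Module.End.mul_apply, LinearMap.smul_apply, dg_X, map_smul, opF_X]
  split_ifs
  · simp
  · rw [dg_X, smul_smul]; congr 1; unfold wt; ring

lemma rel_dgE {N : ℕ} (q κ z x y : k) (hxy : x * y = 1) :
    dg z x y * opE N q κ = x • (opE N q κ * dg z x y) := by
  refine ext_X fun a b => ?_
  simp only [Module.End.mul_apply, LinearMap.smul_apply, dg_X, map_smul, opE_X, map_sub]
  have h1 : dg z x y (up N a b) = (x * wt z x y a b) • up N a b := by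
    unfold up; split_ifs
    · simp
    · rw [dg_X]; congr 1; unfold wt; ring
  have h2 : co q κ a b • wt z x y (a - 1) b • (X (a - 1) b : ℕ × ℕ →₀ k)
      = co q κ a b • (x * wt z x y a b) • X (a - 1) b := by
    cases a with
    | zero => simp [co, gn]
    | succ a =>
      congr 2
      unfold wt
      rw [Nat.add_sub_cancel, pow_succ]
      linear_combination (-(z * x ^ b * y ^ a)) * hxy
  rw [h1, h2]
  module

lemma succ_mod_nd {N a : ℕ} (hN : 2 ≤ N) (h : ¬ N ∣ a + 1) : (a + 1) % N = a % N + 1 := by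
  have h1 := Nat.mod_lt a (show N > 0 by omega)
  rw [Nat.dvd_iff_mod_eq_zero, Nat.add_mod, Nat.mod_eq_of_lt (show 1 < N by omega)] at h
  rw [Nat.add_mod, Nat.mod_eq_of_lt (show 1 < N by omega)]
  rcases Nat.lt_or_ge (a % N + 1) N with h2 | h2
  · exact Nat.mod_eq_of_lt h2
  · exact absurd (by rw [show a % N + 1 = N by omega, Nat.mod_self]) h

lemma opF_nil (N : ℕ) (hN : 2 ≤ N) : (opF N : Module.End k (ℕ × ℕ →₀ k)) ^ N = 0 := by
  have key : ∀ m a b, N ≤ a % N + m → (opF N ^ m) (X a b : ℕ × ℕ →₀ k) = 0 := by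
    intro m
    induction m with
    | zero => intro a b h; have := Nat.mod_lt a (show N > 0 by omega); omega
    | succ m ih =>
      intro a b h
      rw [pow_succ, Module.End.mul_apply, opF_X]
      split_ifs with h1
      · simp
      · refine ih _ _ ?_
        have := succ_mod_nd hN h1
        omega
  exact ext_X fun a b => key N a b (by omega)

lemma opE_nil {N : ℕ} {q : k} (hq : IsPrimitiveRoot q N) (hN : 2 ≤ N) (κ : k) :
    opE N q κ ^ N = 0 := by
  have key : ∀ m a b, N ∣ a → N ≤ b % N + m → (opE N q κ ^ m) (X a b) = 0 := by
    intro m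
    induction m with
    | zero => intro a b _ h; have := Nat.mod_lt b (show N > 0 by omega); omega
    | succ m ih =>
      intro a b ha h
      rw [pow_succ, Module.End.mul_apply, opE_X, co_zero hq hN κ ha, zero_smul, sub_zero, map_smul]
      unfold up
      split_ifs with h1
      · simp
      · rw [ih _ _ ha, smul_zero]
        have := succ_mod_nd hN h1
        omega
  have hq0 : q ≠ 0 := hq.ne_zero (by omega)
  have comm : opF N * opE N q κ ^ N = opE N q κ ^ N * opF N := by
    have h := FE_pow (p := q⁻¹) (E := opE N q κ) (F := opF N) (g := dg κ (q ^ 2)⁻¹ (q ^ 2))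
      (by rw [rel_dgE _ _ _ _ _ (inv_mul_cancel₀ (pow_ne_zero 2 hq0)), inv_pow])
      (rel_FE hq hN κ) (N - 1)
    rw [show N - 1 + 1 = N by omega, gn_zero hq.inv hN dvd_rfl, zero_smul, add_zero, inv_pow,
      hq.pow_eq_one, inv_one, one_smul] at h
    exact h
  refine ext_X fun a b => ?_
  rw [LinearMap.zero_apply]
  induction a with
  | zero => exact key N 0 b (dvd_zero _) (by omega)
  | succ a ih =>
    by_cases h : N ∣ a + 1
    · exact key N _ b h (by omega)
    · have : (X (a + 1) b : ℕ × ℕ →₀ k) = opF N (X a b) := by rw [opF_X, if_neg h]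
      rw [this, ← Module.End.mul_apply, ← comm, Module.End.mul_apply, ih, map_zero]

lemma op_FE_X {N : ℕ} (q κ : k) {a b : ℕ} (ha : a < N) (hb : b < N) :
    (opF N ^ a) ((opE N q κ ^ b) (X 0 0)) = X a b := by
  have h1 : ∀ b, b < N → (opE N q κ ^ b) (X 0 0) = X 0 b := by
    intro b
    induction b with
    | zero => intro _; simp
    | succ b ih =>
      intro hb
      rw [pow_succ', Module.End.mul_apply, ih (by omega), opE_X, up,
        if_neg (Nat.not_dvd_of_pos_of_lt (by omega) hb)]
      simp [co, gn]
  rw [h1 b hb]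
  clear h1
  induction a with
  | zero => simp
  | succ a ih =>
    rw [pow_succ', Module.End.mul_apply, ih (by omega), opF_X,
      if_neg (Nat.not_dvd_of_pos_of_lt (by omega) ha)]

end rep
section relns
variable {k A : Type} [Field k] [Ring A] [Algebra k A] {n : ℕ} {q : k} {K H E F : A}

/-- The defining relations, in an arbitrary algebra. -/
structure RR (n : ℕ) (q : k) (K H E F : A) : Prop where
  Kn : K ^ n = 1
  Hn : H ^ n = (K ^ (n - 1)) ^ 2
  KH : K * H = H * K
  KE : K * E * K ^ (n - 1) = q ^ n • E
  KF : K * F * K ^ (n - 1) = (q ^ n)⁻¹ • F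
  HE : H * E * H ^ (n ^ 2 - 1) = (q ^ n * (q ^ 2)⁻¹) • E
  HF : H * F * H ^ (n ^ 2 - 1) = ((q ^ n)⁻¹ * q ^ 2) • F
  EN : E ^ n ^ 2 = 0
  FN : F ^ n ^ 2 = 0
  FE : F * E - q⁻¹ • (E * F) = 1 - K ^ (n - 1) * H

lemma pow_comm_left {X Y : A} {a : k} (h : X * Y = a • (Y * X)) (m : ℕ) :
    X ^ m * Y = a ^ m • (Y * X ^ m) := by
  induction m with
  | zero => simp
  | succ m ih =>
    rw [pow_succ, mul_assoc, h, mul_smul_comm, ← mul_assoc, ih, smul_mul_assoc, smul_smul,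
      mul_assoc, pow_succ' a]

lemma mul_comm_scalar {X X' Y : A} {a b : k} (h : X * Y = a • (Y * X)) (h' : X' * Y = b • (Y * X')) :
    (X * X') * Y = (a * b) • (Y * (X * X')) := by
  rw [mul_assoc, h', mul_smul_comm, ← mul_assoc, h, smul_mul_assoc, smul_smul, mul_assoc, mul_comm a]

lemma unconj {X Y : A} {a : k} {m : ℕ} (hm : 0 < m) (h1 : X ^ m = 1)
    (h : X * Y * X ^ (m - 1) = a • Y) : X * Y = a • (Y * X) := by
  rw [← smul_mul_assoc, ← h, mul_assoc, ← pow_succ, show m - 1 + 1 = m by omega, h1, mul_one]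

lemma reconj {X Y : A} {a : k} {m : ℕ} (hm : 0 < m) (h1 : X ^ m = 1)
    (h : X * Y = a • (Y * X)) : X * Y * X ^ (m - 1) = a • Y := by
  rw [h, smul_mul_assoc, mul_assoc, ← pow_succ', show m - 1 + 1 = m by omega, h1, mul_one]

lemma pow_mod1 {B : Type} [Monoid B] {x : B} {m : ℕ} (h : x ^ m = 1) {a b t : ℕ}
    (e : a = b + m * t) : x ^ a = x ^ b := by
  rw [e, pow_add, pow_mul, h, one_pow, mul_one]

lemma RR.HN (R : RR n q K H E F) : H ^ n ^ 2 = 1 := by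
  rw [pow_two, pow_mul, R.Hn, ← pow_mul, ← pow_mul, show (n - 1) * (2 * n) = n * (2 * (n - 1)) by ring,
    pow_mul, R.Kn, one_pow]

lemma RR.KE' (R : RR n q K H E F) (hn : 0 < n) : K * E = q ^ n • (E * K) := unconj hn R.Kn R.KE
lemma RR.KF' (R : RR n q K H E F) (hn : 0 < n) : K * F = (q ^ n)⁻¹ • (F * K) :=
  unconj hn R.Kn R.KF
lemma RR.HE' (R : RR n q K H E F) (hn : 0 < n) : H * E = (q ^ n * (q ^ 2)⁻¹) • (E * H) :=
  unconj (by positivity) R.HN R.HE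
lemma RR.HF' (R : RR n q K H E F) (hn : 0 < n) : H * F = ((q ^ n)⁻¹ * q ^ 2) • (F * H) :=
  unconj (by positivity) R.HN R.HF

lemma qn_inv (hn : 0 < n) (hq : q ^ n ^ 2 = 1) : (q ^ n) ^ (n - 1) = (q ^ n)⁻¹ := by
  refine eq_inv_of_mul_eq_one_left ?_
  rw [← pow_succ, show n - 1 + 1 = n by omega, ← pow_mul, ← pow_two, hq]

lemma q_ne (hn : 0 < n) (hq : q ^ n ^ 2 = 1) : q ≠ 0 := by
  rintro rfl
  rw [zero_pow (by positivity)] at hq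
  exact zero_ne_one hq

lemma RR.gE (R : RR n q K H E F) (hn : 0 < n) (hq : q ^ n ^ 2 = 1) :
    (K ^ (n - 1) * H) * E = (q ^ 2)⁻¹ • (E * (K ^ (n - 1) * H)) := by
  rw [mul_comm_scalar (pow_comm_left (R.KE' hn) (n - 1)) (R.HE' hn), qn_inv hn hq, ← mul_assoc,
    inv_mul_cancel₀ (pow_ne_zero _ (q_ne hn hq)), one_mul]

lemma RR.gF (R : RR n q K H E F) (hn : 0 < n) (hq : q ^ n ^ 2 = 1) :
    (K ^ (n - 1) * H) * F = q ^ 2 • (F * (K ^ (n - 1) * H)) := by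
  rw [mul_comm_scalar (pow_comm_left (R.KF' hn) (n - 1)) (R.HF' hn), inv_pow, qn_inv hn hq,
    ← mul_assoc, inv_inv, mul_inv_cancel₀ (pow_ne_zero _ (q_ne hn hq)), one_mul]

lemma q_half (hq : IsPrimitiveRoot q (n ^ 2)) (hn : 0 < n) (h2 : 2 ∣ n) :
    q ^ n * (q ^ n * (q ^ 2)⁻¹) ^ (n / 2) = -1 := by
  have hq0 := q_ne hn hq.pow_eq_one
  obtain ⟨m, rfl⟩ := h2
  rw [Nat.mul_div_cancel_left m two_pos, mul_pow, inv_pow, ← pow_mul q 2, mul_left_comm,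
    mul_inv_cancel₀ (pow_ne_zero _ hq0), mul_one]
  have h := hq.pow (show 0 < (2 * m) ^ 2 by positivity) (show (2 * m) ^ 2 = (2 * m * m) * 2 by ring)
  rw [← pow_mul]
  exact h.eq_neg_one_of_two_right

lemma RR.cE (R : RR n q K H E F) (hn : 0 < n) (h2 : 2 ∣ n) (hq : IsPrimitiveRoot q (n ^ 2)) :
    (K * H ^ (n / 2)) * E = -(E * (K * H ^ (n / 2))) := by
  rw [mul_comm_scalar (R.KE' hn) (pow_comm_left (R.HE' hn) (n / 2)), q_half hq hn h2]
  module

lemma RR.cF (R : RR n q K H E F) (hn : 0 < n) (h2 : 2 ∣ n) (hq : IsPrimitiveRoot q (n ^ 2)) :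
    (K * H ^ (n / 2)) * F = -(F * (K * H ^ (n / 2))) := by
  have h : (q ^ n)⁻¹ * ((q ^ n)⁻¹ * q ^ 2) ^ (n / 2) = -1 := by
    have := congrArg (·⁻¹) (q_half hq hn h2)
    simp only [mul_inv, inv_inv, ← inv_pow] at this
    simp only [← inv_pow]
    rw [this]; norm_num
  rw [mul_comm_scalar (R.KF' hn) (pow_comm_left (R.HF' hn) (n / 2)), h]
  module

lemma mono_mul (KH : K * H = H * K) (a b a' b' : ℕ) :
    (K ^ a * H ^ b) * (K ^ a' * H ^ b') = K ^ (a + a') * H ^ (b + b') := by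
  have : H ^ b * K ^ a' = K ^ a' * H ^ b := ((show Commute K H from KH).pow_pow a' b).eq.symm
  rw [mul_assoc, ← mul_assoc (H ^ b), this, pow_add, pow_add]
  simp only [mul_assoc]

lemma mono_pow (KH : K * H = H * K) (a b m : ℕ) :
    (K ^ a * H ^ b) ^ m = K ^ (a * m) * H ^ (b * m) := by
  rw [((show Commute K H from KH).pow_pow a b).mul_pow, pow_mul, pow_mul]

lemma gpow (KH : K * H = H * K) (m : ℕ) :
    (K ^ (n - 1) * H) ^ m = K ^ ((n - 1) * m) * H ^ m := by
  have := mono_pow KH (n - 1) 1 m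
  rwa [pow_one, one_mul] at this

lemma RR.gc (R : RR n q K H E F) :
    (K ^ (n - 1) * H) * (K * H ^ (n / 2)) = (K * H ^ (n / 2)) * (K ^ (n - 1) * H) := by
  have h1 := mono_mul R.KH (n - 1) 1 1 (n / 2)
  have h2 := mono_mul R.KH 1 (n / 2) (n - 1) 1
  rw [pow_one, pow_one] at h1 h2
  rw [h1, h2, add_comm (n - 1) 1, add_comm 1 (n / 2)]

lemma RR.gM (R : RR n q K H E F) (h2 : 2 ∣ n) : (K ^ (n - 1) * H) ^ (n ^ 2 / 2) = 1 := by
  rw [gpow R.KH]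
  obtain ⟨m, hm⟩ := h2
  have e : n ^ 2 / 2 = n * m := by
    rw [hm, show (2 * m) ^ 2 = 2 * (2 * m * m) by ring, Nat.mul_div_cancel_left _ two_pos]
  rw [e, mul_left_comm, pow_mul, R.Kn, one_pow, one_mul, pow_mul, R.Hn, ← pow_mul, ← pow_mul,
    ← hm, mul_comm, pow_mul, R.Kn, one_pow]

lemma RR.Hn' (R : RR n q K H E F) : H ^ n = K ^ ((n - 1) * 2) := by rw [R.Hn, pow_mul]

lemma RR.cc (R : RR n q K H E F) (hn : 0 < n) (h2 : 2 ∣ n) :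
    (K * H ^ (n / 2)) * (K * H ^ (n / 2)) = 1 := by
  have h1 := mono_mul R.KH 1 (n / 2) 1 (n / 2)
  rw [pow_one] at h1
  rw [h1, show n / 2 + n / 2 = n by omega, R.Hn', ← pow_add,
    show 1 + 1 + (n - 1) * 2 = n * 2 by omega, pow_mul, R.Kn, one_pow]

lemma RR.FE' (R : RR n q K H E F) :
    F * E = q⁻¹ • (E * F) + (1 - K ^ (n - 1) * H) := by rw [← R.FE]; abel

lemma RR.K_eq (R : RR n q K H E F) (hn : 0 < n) (h4 : 4 ∣ n) :
    K = ((K * H ^ (n / 2)) * (K ^ (n - 1) * H) ^ (n / 2 * (n - 1))) ^ (1 + n / 2) := by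
  have h1 := mono_mul R.KH 1 (n / 2) ((n - 1) * (n / 2 * (n - 1))) (n / 2 * (n - 1))
  rw [pow_one] at h1
  rw [gpow R.KH, h1]
  obtain ⟨m, rfl⟩ := h4
  obtain ⟨s, rfl⟩ : ∃ s, m = s + 1 := ⟨m - 1, by omega⟩
  have e1 : 4 * (s + 1) / 2 = 2 * (s + 1) := by omega
  have e2 : 4 * (s + 1) - 1 = 4 * s + 3 := by omega
  have hH := R.Hn'
  have hK := R.Kn
  rw [e2] at hH
  rw [e1, e2, show 2 * (s + 1) + 2 * (s + 1) * (4 * s + 3) = 4 * (s + 1) * (2 * (s + 1)) by ring,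
    pow_mul H, hH, ← pow_mul, ← pow_add, ← pow_mul]
  conv_lhs => rw [← pow_one K]
  symm
  exact pow_mod1 hK (t := (16 * s ^ 3 + 48 * s ^ 2 + 45 * s + 14) + (4 * s + 3) * (2 * s + 3))
    (by ring)

lemma RR.H_eq (R : RR n q K H E F) (hn : 0 < n) : H = K * (K ^ (n - 1) * H) := by
  rw [← mul_assoc, ← pow_succ', show n - 1 + 1 = n by omega, R.Kn, one_mul]

end relns
section repU
set_option linter.unusedSimpArgs false
variable {k : Type} [Field k] {n : ℕ} {q : k}

lemma dg_mul (z x y z' x' y' : k) : dg z x y * dg z' x' y' = dg (z * z') (x * x') (y * y') := by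
  refine ext_X fun a b => ?_
  rw [Module.End.mul_apply, dg_X, map_smul, dg_X, dg_X, smul_smul]
  congr 1
  unfold wt
  rw [mul_pow, mul_pow]; ring

lemma dg_one : dg (1 : k) 1 1 = 1 := by
  refine ext_X fun a b => ?_
  rw [dg_X]; simp [wt]

lemma dg_pow (z x y : k) (m : ℕ) : dg z x y ^ m = dg (z ^ m) (x ^ m) (y ^ m) := by
  induction m with
  | zero => simp [dg_one]
  | succ m ih => rw [pow_succ, ih, dg_mul, pow_succ, pow_succ, pow_succ]

/-- scalars -/
structure SC (n : ℕ) (κ ε ζ ξ : k) : Prop where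
  zn : ζ ^ n = 1
  xn : ξ ^ n = (ζ ^ (n - 1)) ^ 2
  zx : ζ ^ (n - 1) * ξ = κ
  e : ζ * ξ ^ (n / 2) = ε

lemma exists_SC (hn : 0 < n) (h4 : 4 ∣ n) {κ ε : k} (hκ : κ ^ (n ^ 2 / 2) = 1) (hε : ε ^ 2 = 1) :
    ∃ ζ ξ, SC n κ ε ζ ξ := by
  obtain ⟨m, rfl⟩ := h4
  obtain ⟨s, rfl⟩ : ∃ s, m = s + 1 := ⟨m - 1, by omega⟩
  have e1 : 4 * (s + 1) / 2 = 2 * (s + 1) := by omega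
  have e2 : 4 * (s + 1) - 1 = 4 * s + 3 := by omega
  have e3 : (4 * (s + 1)) ^ 2 / 2 = 8 * (s + 1) ^ 2 := by
    rw [show (4 * (s + 1)) ^ 2 = 2 * (8 * (s + 1) ^ 2) by ring, Nat.mul_div_cancel_left _ two_pos]
  rw [e3] at hκ
  set ζ := ε * κ ^ (2 * (s + 1) * (4 * s + 3) * (2 * s + 3)) with hz
  have hz1 : ζ ^ (4 * (s + 1)) = 1 := by
    rw [hz, mul_pow, ← pow_mul, pow_mod1 hε (b := 0) (t := 2 * (s + 1)) (by ring),
      pow_mod1 hκ (b := 0) (t := (4 * s + 3) * (2 * s + 3)) (by ring)]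
    simp
  have hz2 : ζ ^ (4 * s + 3) * ζ = 1 := by
    rw [← pow_succ, ← hz1]; rfl
  have hz0 : ζ ≠ 0 := right_ne_zero_of_mul_eq_one hz2
  refine ⟨ζ, ζ * κ, ?_, ?_, ?_, ?_⟩
  · exact hz1
  · rw [e2, mul_pow, hz1, one_mul]
    have h : (ζ ^ (4 * s + 3)) ^ 2 * ζ ^ 2 = 1 := by rw [← mul_pow, hz2, one_pow]
    have h' : κ ^ (4 * (s + 1)) * ζ ^ 2 = 1 := by
      rw [hz, mul_pow, hε, one_mul, ← pow_mul, ← pow_add]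
      rw [pow_mod1 hκ (b := 0) (t := 4 * s + 5) (by ring), pow_zero]
    exact mul_right_cancel₀ (pow_ne_zero 2 hz0) (h'.trans h.symm)
  · rw [e2, ← mul_assoc, hz2, one_mul]
  · rw [e1, mul_pow, ← mul_assoc, ← pow_succ', hz, mul_pow, ← pow_mul, mul_assoc, ← pow_add,
      pow_mod1 hε (b := 1) (t := (s + 1)) (by ring),
      pow_mod1 hκ (b := 0) (t := (s + 1) * (4 * s + 7)) (by ring)]
    simp

lemma of_FE {A : Type} [Ring A] [Algebra k A] {E F g g' : A}
    (h : F * E = q⁻¹ • (E * F) + (1 - g)) (e : g = g') : F * E - q⁻¹ • (E * F) = 1 - g' := by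
  rw [h, e]; abel

lemma RR_rep (hn : 0 < n) (h4 : 4 ∣ n) (hq : IsPrimitiveRoot q (n ^ 2)) {κ ε ζ ξ : k}
    (S : SC n κ ε ζ ξ) :
    RR n q (dg ζ (q ^ n) (q ^ n)⁻¹) (dg ξ (q ^ n * (q ^ 2)⁻¹) ((q ^ n)⁻¹ * q ^ 2))
      (opE (n ^ 2) q κ) (opF (n ^ 2)) := by
  have hq1 := hq.pow_eq_one
  have hq0 := q_ne hn hq1
  have hN : 2 ≤ n ^ 2 := by
    have := Nat.le_of_dvd hn h4
    nlinarith
  have hYn : (q ^ n) ^ n = 1 := by rw [← pow_mul, ← pow_two, hq1]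
  have hY0 : q ^ n ≠ 0 := pow_ne_zero _ hq0
  have hYi := qn_inv hn hq1
  have hKn : dg ζ (q ^ n) (q ^ n)⁻¹ ^ n = 1 := by
    rw [dg_pow, S.zn, inv_pow, hYn, inv_one, dg_one]
  have h1 : (q ^ n * (q ^ 2)⁻¹) * ((q ^ n)⁻¹ * q ^ 2) = 1 := by field_simp
  have hHn : dg ξ (q ^ n * (q ^ 2)⁻¹) ((q ^ n)⁻¹ * q ^ 2) ^ n =
      (dg ζ (q ^ n) (q ^ n)⁻¹ ^ (n - 1)) ^ 2 := by
    rw [dg_pow, dg_pow, dg_pow, S.xn, inv_pow, hYi, mul_pow, mul_pow, inv_pow, inv_pow, hYn]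
    congr 1
    · rw [one_mul, inv_pow, ← pow_mul, ← pow_mul, mul_comm]
    · rw [inv_one, one_mul, inv_inv, ← pow_mul, ← pow_mul, mul_comm]
  have hHN : dg ξ (q ^ n * (q ^ 2)⁻¹) ((q ^ n)⁻¹ * q ^ 2) ^ n ^ 2 = 1 := by
    rw [pow_two n, pow_mul, hHn, ← pow_mul, ← pow_mul,
      show (n - 1) * (2 * n) = n * (2 * (n - 1)) by ring, pow_mul, hKn, one_pow]
  constructor
  · exact hKn
  · exact hHn
  · rw [dg_mul, dg_mul, mul_comm ζ, mul_comm (q ^ n), mul_comm (q ^ n)⁻¹]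
  · exact reconj hn hKn (rel_dgE _ _ _ _ _ (mul_inv_cancel₀ hY0))
  · exact reconj hn hKn (rel_dgF _ _ _)
  · exact reconj (by positivity) hHN (rel_dgE _ _ _ _ _ h1)
  · exact reconj (by positivity) hHN (rel_dgF _ _ _)
  · exact opE_nil hq hN κ
  · exact opF_nil _ hN
  · refine of_FE (rel_FE hq hN κ) ?_
    rw [dg_pow, dg_mul, S.zx, inv_pow, hYi, inv_inv,
      ← mul_assoc, ← mul_assoc, inv_mul_cancel₀ hY0, mul_inv_cancel₀ hY0, one_mul, one_mul]

/-- Universal property. -/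
lemma lift_U {A : Type} [Ring A] [Algebra k A] {K H E F : A} (R : RR n q K H E F) :
    ∃ f : QFL.U k n q →ₐ[k] A, f (QFL.K k n q) = K ∧ f (QFL.Kh k n q) = H ∧
      f (QFL.E k n q) = E ∧ f (QFL.F k n q) = F := by
  let φ : FreeAlgebra k (Fin 4) →ₐ[k] A := FreeAlgebra.lift k ![K, H, E, F]
  have h0 : φ (FreeAlgebra.ι k 0) = K := by simp [φ]
  have h1 : φ (FreeAlgebra.ι k 1) = H := by simp [φ]
  have h2 : φ (FreeAlgebra.ι k 2) = E := by simp [φ]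
  have h3 : φ (FreeAlgebra.ι k 3) = F := by simp [φ]
  have hφ : ∀ ⦃x y⦄, QFL.Rel k n q x y → φ x = φ y := by
    intro x y h
    cases h <;> simp only [map_mul, map_pow, map_sub, map_smul, map_one, map_zero, h0, h1, h2, h3]
    · exact R.Kn
    · exact R.Hn
    · exact R.KH
    · exact R.KE
    · exact R.KF
    · exact R.HE
    · exact R.HF
    · exact R.EN
    · exact R.FN
    · exact R.FE
  refine ⟨RingQuot.liftAlgHom k ⟨φ, hφ⟩, ?_, ?_, ?_, ?_⟩
  · rw [QFL.K, RingQuot.liftAlgHom_mkAlgHom_apply, h0]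
  · rw [QFL.Kh, RingQuot.liftAlgHom_mkAlgHom_apply, h1]
  · rw [QFL.E, RingQuot.liftAlgHom_mkAlgHom_apply, h2]
  · rw [QFL.F, RingQuot.liftAlgHom_mkAlgHom_apply, h3]

lemma RR_U : RR n q (QFL.K k n q) (QFL.Kh k n q) (QFL.E k n q) (QFL.F k n q) := by
  have key : ∀ {x y}, QFL.Rel k n q x y →
    RingQuot.mkAlgHom k (QFL.Rel k n q) x = RingQuot.mkAlgHom k (QFL.Rel k n q) y :=
    fun h => RingQuot.mkAlgHom_rel k h
  constructor
  · have h := key QFL.Rel.Kord; simp only [map_mul, map_pow, map_sub, map_smul, map_one, map_zero] at h; exact h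
  · have h := key QFL.Rel.Khord; simp only [map_mul, map_pow, map_sub, map_smul, map_one, map_zero] at h; exact h
  · have h := key QFL.Rel.KKh; simp only [map_mul, map_pow, map_sub, map_smul, map_one, map_zero] at h; exact h
  · have h := key QFL.Rel.KE; simp only [map_mul, map_pow, map_sub, map_smul, map_one, map_zero] at h; exact h
  · have h := key QFL.Rel.KF; simp only [map_mul, map_pow, map_sub, map_smul, map_one, map_zero] at h; exact h
  · have h := key QFL.Rel.KhE; simp only [map_mul, map_pow, map_sub, map_smul, map_one, map_zero] at h; exact h
  · have h := key QFL.Rel.KhF; simp only [map_mul, map_pow, map_sub, map_smul, map_one, map_zero] at h; exact h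
  · have h := key QFL.Rel.Enil; simp only [map_mul, map_pow, map_sub, map_smul, map_one, map_zero] at h; exact h
  · have h := key QFL.Rel.Fnil; simp only [map_mul, map_pow, map_sub, map_smul, map_one, map_zero] at h; exact h
  · have h := key QFL.Rel.EF; simp only [map_mul, map_pow, map_sub, map_smul, map_one, map_zero] at h; exact h

/-- `g = K⁻¹K̂` -/
def gU (k : Type) [Field k] (n : ℕ) (q : k) : QFL.U k n q :=
  QFL.K k n q ^ (n - 1) * QFL.Kh k n q

/-- `c = KK̂^(n/2)` -/
def cU (k : Type) [Field k] (n : ℕ) (q : k) : QFL.U k n q :=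
  QFL.K k n q * QFL.Kh k n q ^ (n / 2)

lemma K_eqU (hn : 0 < n) (h4 : 4 ∣ n) :
    QFL.K k n q = (cU k n q * gU k n q ^ (n / 2 * (n - 1))) ^ (1 + n / 2) := RR_U.K_eq hn h4

lemma Kh_eqU (hn : 0 < n) : QFL.Kh k n q = QFL.K k n q * gU k n q := RR_U.H_eq hn

lemma gen_U (hn : 0 < n) (h4 : 4 ∣ n) :
    Algebra.adjoin k {gU k n q, cU k n q, QFL.E k n q, QFL.F k n q} = ⊤ := by
  set S := Algebra.adjoin k {gU k n q, cU k n q, QFL.E k n q, QFL.F k n q} with hS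
  have hg : gU k n q ∈ S := Algebra.subset_adjoin (by simp)
  have hc : cU k n q ∈ S := Algebra.subset_adjoin (by simp)
  have hE : QFL.E k n q ∈ S := Algebra.subset_adjoin (by simp)
  have hF : QFL.F k n q ∈ S := Algebra.subset_adjoin (by simp)
  have hK : QFL.K k n q ∈ S := by
    rw [K_eqU hn h4]
    exact pow_mem (mul_mem hc (pow_mem hg _)) _
  have hH : QFL.Kh k n q ∈ S := by
    rw [Kh_eqU hn]
    exact mul_mem hK hg
  refine eq_top_iff.mpr fun x _ => ?_
  obtain ⟨y, rfl⟩ := RingQuot.mkAlgHom_surjective k (QFL.Rel k n q) x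
  induction y using FreeAlgebra.induction with
  | grade0 r => rw [AlgHom.commutes]; exact S.algebraMap_mem r
  | grade1 i =>
    fin_cases i
    · exact hK
    · exact hH
    · exact hE
    · exact hF
  | mul a b ha hb => rw [map_mul]; exact mul_mem (ha trivial) (hb trivial)
  | add a b ha hb => rw [map_add]; exact add_mem (ha trivial) (hb trivial)

lemma map_ee {A B : Type} [Ring A] [Algebra k A] [Ring B] [Algebra k B] (f : A →ₐ[k] B) (M : ℕ)
    (g c : A) (κ ε : k) : f (ee M g c κ ε) = ee M (f g) (f c) κ ε := by
  simp [ee]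

lemma ee_apply {V : Type} [AddCommGroup V] [Module k V] (M : ℕ) (G C : Module.End k V) {κ ε : k}
    {v : V} (hG : G v = κ • v) (hC : C v = ε • v) (κ' ε' : k) :
    ee M G C κ' ε' v =
      (((M : k)⁻¹ * ∑ t ∈ Finset.range M, (κ'⁻¹ * κ) ^ t) * (2⁻¹ * (1 + ε' * ε))) • v := by
  have hGt : ∀ t, (G ^ t) v = κ ^ t • v := by
    intro t
    induction t with
    | zero => simp
    | succ t ih => rw [pow_succ, Module.End.mul_apply, hG, map_smul, ih, smul_smul, pow_succ']
  unfold ee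
  rw [Module.End.mul_apply]
  have : ((2 : k)⁻¹ • (1 + ε' • C)) v = (2⁻¹ * (1 + ε' * ε)) • v := by
    simp only [LinearMap.smul_apply, LinearMap.add_apply, Module.End.one_apply, hC]
    module
  rw [this, map_smul, LinearMap.smul_apply, LinearMap.sum_apply]
  simp only [LinearMap.smul_apply, hGt, smul_smul, ← mul_pow]
  rw [← Finset.sum_smul, smul_smul]
  congr 1
  ring

end repU
section
variable {k : Type} [Field k] {n : ℕ} {q : k}
lemma map_eeU1 {B : Type} [Ring B] [Algebra k B] (f : QFL.U k n q →ₐ[k] B) (M : ℕ)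
    (κ ε : k) : f (ee M (gU k n q) (cU k n q) κ ε) = ee M (f (gU k n q)) (f (cU k n q)) κ ε := by
  exact map_ee (A := QFL.U k n q) f M (gU k n q) (cU k n q) κ ε
lemma map_eeU2 (f : QFL.U k n q →ₐ[k] Module.End k (ℕ × ℕ →₀ k)) (M : ℕ)
    (κ ε : k) : f (ee M (gU k n q) (cU k n q) κ ε) = ee M (f (gU k n q)) (f (cU k n q)) κ ε := by
  exact map_eeU1 (B := Module.End k (ℕ × ℕ →₀ k)) f M κ ε
end
section repU
variable {k : Type} [Field k] {n : ℕ} {q : k}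
lemma li_U [CharZero k] (hn : 0 < n) (h4 : 4 ∣ n) (hq : IsPrimitiveRoot q (n ^ 2)) {M : ℕ}
    (hM : n ^ 2 / 2 = M) :
    LinearIndependent k (fun x : Fin (n ^ 2) × Fin (n ^ 2) × Fin M × Fin 2 =>
      QFL.F k n q ^ (x.1 : ℕ) * (QFL.E k n q ^ (x.2.1 : ℕ) *
        ee M (gU k n q) (cU k n q) (q ^ (2 * (x.2.2.1 : ℕ)))
          ((-1) ^ (x.2.2.2 : ℕ)))) := by
  rw [Fintype.linearIndependent_iff]
  intro f hf x0
  obtain ⟨a0, b0, i0, j0⟩ := x0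
  have hM2 : n ^ 2 = 2 * M := by
    rw [← hM]
    obtain ⟨m, hm⟩ := h4
    rw [hm]
    rw [show (4 * m) ^ 2 = 2 * (8 * m ^ 2) by ring, Nat.mul_div_cancel_left _ two_pos]
  have hMpos : 0 < M := i0.pos
  have hq0 := q_ne hn hq.pow_eq_one
  have hq2 : IsPrimitiveRoot (q ^ 2) M := hq.pow (by positivity) hM2
  have hκ : (q ^ (2 * (i0 : ℕ))) ^ M = 1 := by
    rw [pow_mul, ← pow_mul, mul_comm, pow_mul, hq2.pow_eq_one, one_pow]
  obtain ⟨ζ, ξ, S⟩ := exists_SC hn h4 (κ := q ^ (2 * (i0 : ℕ))) (ε := (-1) ^ (j0 : ℕ))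
    (by rw [hM]; exact hκ) (sgn2 _)
  obtain ⟨ρ, rK, rH, rE, rF⟩ := lift_U (RR_rep hn h4 hq S)
  have hG : ρ (gU k n q) (X 0 0) = q ^ (2 * (i0 : ℕ)) • (X 0 0 : ℕ × ℕ →₀ k) := by
    rw [gU, map_mul, map_pow, rK, rH, dg_pow, dg_mul, dg_X, S.zx]; simp [wt]
  have hC : ρ (cU k n q) (X 0 0) = (-1 : k) ^ (j0 : ℕ) • (X 0 0 : ℕ × ℕ →₀ k) := by
    rw [cU, map_mul, map_pow, rK, rH, dg_pow, dg_mul, dg_X, S.e]; simp [wt]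
  have hv : ∀ (a b : Fin (n ^ 2)) (i : Fin M) (j : Fin 2),
      (ρ (QFL.F k n q ^ (a : ℕ) * (QFL.E k n q ^ (b : ℕ) *
        ee M (gU k n q) (cU k n q) (q ^ (2 * (i : ℕ))) ((-1) ^ (j : ℕ)))) (X 0 0)) (↑a0, ↑b0) =
      if (a, b, i, j) = (a0, b0, i0, j0) then 1 else 0 := by
    intro a b i j
    have hee : ρ (ee M (gU k n q) (cU k n q) (q ^ (2 * (i : ℕ))) ((-1) ^ (j : ℕ))) =
        ee M (ρ (gU k n q)) (ρ (cU k n q)) (q ^ (2 * (i : ℕ))) ((-1) ^ (j : ℕ)) :=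
      map_eeU2 ρ _ _ _
    rw [map_mul, map_mul, map_pow, map_pow, hee, rE, rF, Module.End.mul_apply,
      Module.End.mul_apply, ee_apply M _ _ hG hC, map_smul, map_smul, op_FE_X q _ a.2 b.2]
    have hc1 : ((M : k)⁻¹ * ∑ t ∈ Finset.range M, ((q ^ (2 * (i : ℕ)))⁻¹ * q ^ (2 * (i0 : ℕ))) ^ t)
        = if i = i0 then 1 else 0 := by
      split_ifs with h
      · subst h
        rw [inv_mul_cancel₀ (pow_ne_zero _ hq0)]
        simp [hMpos.ne']
      · have h1 := mul_geom_sum ((q ^ (2 * (i : ℕ)))⁻¹ * q ^ (2 * (i0 : ℕ))) M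
        rw [mul_pow, hκ, inv_pow, show (q ^ (2 * (i : ℕ))) ^ M = 1 by
          rw [pow_mul, ← pow_mul, mul_comm, pow_mul, hq2.pow_eq_one, one_pow], inv_one, one_mul,
          sub_self] at h1
        rcases mul_eq_zero.mp h1 with h2 | h2
        · exfalso
          apply h
          have h3 : (q ^ 2) ^ (i0 : ℕ) = (q ^ 2) ^ (i : ℕ) := by
            rw [← pow_mul, ← pow_mul]
            have := sub_eq_zero.mp h2
            rwa [inv_mul_eq_one₀ (pow_ne_zero _ hq0), eq_comm] at this
          exact (Fin.ext (hq2.pow_inj i0.2 i.2 h3)).symm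
        · rw [h2, mul_zero]
    have hc2 : ((2 : k)⁻¹ * (1 + (-1) ^ (j : ℕ) * (-1) ^ (j0 : ℕ))) = if j = j0 then 1 else 0 := by
      fin_cases j <;> fin_cases j0 <;> norm_num
    have hc3 : (X (a : ℕ) (b : ℕ) : ℕ × ℕ →₀ k) (↑a0, ↑b0) = if (a, b) = (a0, b0) then 1 else 0 := by
      simp [X, Finsupp.single_apply, Fin.ext_iff]
    rw [Finsupp.smul_apply, hc1, hc2, hc3]
    simp only [Prod.mk.injEq]
    split_ifs <;> simp_all
  have h := congrArg (fun u => (ρ u (X 0 0)) ((a0 : ℕ), (b0 : ℕ))) hf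
  simp only [map_sum, map_smul, LinearMap.sum_apply, LinearMap.smul_apply, Finsupp.coe_finsetSum,
    Finset.sum_apply, Finsupp.smul_apply, map_zero, LinearMap.zero_apply, Finsupp.coe_zero,
    Pi.zero_apply] at h
  rw [Finset.sum_congr rfl fun x _ => by rw [hv x.1 x.2.1 x.2.2.1 x.2.2.2]] at h
  simpa using h

lemma Data_U [CharZero k] (hn : 0 < n) (h4 : 4 ∣ n) (hq : IsPrimitiveRoot q (n ^ 2)) :
    Data (n ^ 2) (n ^ 2 / 2) q (QFL.E k n q) (QFL.F k n q) (gU k n q) (cU k n q) := by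
  have h2 : 2 ∣ n := Dvd.dvd.trans (by norm_num) h4
  have hM2 : n ^ 2 = 2 * (n ^ 2 / 2) := by
    obtain ⟨m, rfl⟩ := h4
    rw [show (4 * m) ^ 2 = 2 * (8 * m ^ 2) by ring, Nat.mul_div_cancel_left _ two_pos]
  have hp : 0 < n ^ 2 := by positivity
  have R := RR_U (k := k) (n := n) (q := q)
  exact
  { hN := hM2
    hM := by omega
    hq := hq
    gE := R.gE hn hq.pow_eq_one
    gF := R.gF hn hq.pow_eq_one
    cE := R.cE hn h2 hq
    cF := R.cF hn h2 hq
    gc := R.gc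
    gM := R.gM h2
    cc := R.cc hn h2
    EN := R.EN
    FN := R.FN
    FE := R.FE'
    gen := gen_U hn h4
    li := li_U hn h4 hq rfl }

end repU
section fin
variable {k : Type} [Field k] [CharZero k] {n : ℕ} {q : k}

lemma stab_pow {A : Type} [Ring A] [Algebra k A] {S : Submodule k A} {x : A}
    (h : ∀ y ∈ S, x * y ∈ S) (m : ℕ) : ∀ y ∈ S, x ^ m * y ∈ S := by
  induction m with
  | zero => intro y hy; simpa using hy
  | succ m ih => intro y hy; rw [pow_succ', mul_assoc]; exact h _ (ih y hy)

lemma red_KH (hn : 0 < n) (a b c d : ℕ) (ha : a ≤ n ^ 2 - 2) (hb : b ≤ n ^ 2 - 1) :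
    QFL.F k n q ^ a * (QFL.K k n q ^ c * QFL.Kh k n q ^ d * QFL.E k n q ^ b) ∈ QFL.pbw k n q := by
  have R := RR_U (k := k) (n := n) (q := q)
  have hp : 0 < n ^ 2 := by positivity
  have hc := Nat.mod_lt c hn
  have hd := Nat.mod_lt d hp
  refine Submodule.subset_span ⟨a, b, c % n, d % n ^ 2, ha, hb, by omega, by omega, ?_⟩
  have h1 : QFL.K k n q ^ c = QFL.K k n q ^ (c % n) :=
    pow_mod1 R.Kn (t := c / n) (Nat.mod_add_div c n).symm
  have h2 : QFL.Kh k n q ^ d = QFL.Kh k n q ^ (d % n ^ 2) :=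
    pow_mod1 R.HN (t := d / n ^ 2) (Nat.mod_add_div d _).symm
  rw [h1, h2]
  simp only [mul_assoc]

lemma ee_pbw (hn : 0 < n) (a b : ℕ) (ha : a ≤ n ^ 2 - 2) (hb : b ≤ n ^ 2 - 1) (M : ℕ) (κ ε : k) :
    QFL.F k n q ^ a * (ee M (gU k n q) (cU k n q) κ ε * QFL.E k n q ^ b) ∈ QFL.pbw k n q := by
  have R := RR_U (k := k) (n := n) (q := q)
  rw [ee_eq, smul_mul_assoc, mul_smul_comm]
  refine Submodule.smul_mem _ _ ?_
  rw [Finset.sum_mul, Finset.sum_mul, Finset.mul_sum]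
  refine Submodule.sum_mem _ fun t _ => ?_
  have h1 : gU k n q ^ t = QFL.K k n q ^ ((n - 1) * t) * QFL.Kh k n q ^ t := gpow R.KH t
  have h2 : gU k n q ^ t * cU k n q =
      QFL.K k n q ^ ((n - 1) * t + 1) * QFL.Kh k n q ^ (t + n / 2) := by
    have := mono_mul R.KH ((n - 1) * t) t 1 (n / 2)
    rw [pow_one] at this
    rw [h1, cU, this]
  rw [smul_mul_assoc, smul_mul_assoc, mul_smul_comm]
  refine Submodule.smul_mem _ _ ?_
  rw [mul_add, mul_one, mul_smul_comm, add_mul, mul_add, smul_mul_assoc, mul_smul_comm, h2, h1]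
  exact Submodule.add_mem _ (red_KH hn _ _ _ _ ha hb)
    (Submodule.smul_mem _ _ (red_KH hn _ _ _ _ ha hb))

lemma pbw_eq (hn : 0 < n) (h4 : 4 ∣ n) (hq : IsPrimitiveRoot q (n ^ 2)) :
    QFL.pbw k n q = Fl (n ^ 2 - 1) (n ^ 2) (n ^ 2 / 2) k (QFL.E k n q) (QFL.F k n q)
      (gU k n q) (cU k n q) := by
  have D := Data_U (k := k) hn h4 hq
  have hN := D.N2
  apply le_antisymm
  · refine Submodule.span_le.mpr ?_
    rintro x ⟨a, b, c, d, ha, hb, hc, hd, rfl⟩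
    set B := BB (n ^ 2) (n ^ 2 / 2) k (QFL.E k n q) (gU k n q) (cU k n q) with hB
    have hg : ∀ y ∈ B, gU k n q * y ∈ B := fun y hy => D.BB_g hy
    have hc : ∀ y ∈ B, cU k n q * y ∈ B := fun y hy => D.BB_c hy
    have hE : ∀ y ∈ B, QFL.E k n q * y ∈ B := fun y hy => D.BB_E hy
    have hK : ∀ y ∈ B, QFL.K k n q * y ∈ B := by
      rw [K_eqU hn h4]
      refine stab_pow ?_ _
      intro y hy
      rw [mul_assoc]
      exact hc _ (stab_pow hg _ _ hy)
    have hH : ∀ y ∈ B, QFL.Kh k n q * y ∈ B := by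
      rw [Kh_eqU hn]
      intro y hy
      rw [mul_assoc]
      exact hK _ (hg _ hy)
    have h1 : (1 : QFL.U k n q) ∈ B := by
      rw [← ee_sum (g := gU k n q) (c := cU k n q) D.hN D.hM D.hq]
      exact Submodule.sum_mem _ fun i _ => Submodule.sum_mem _ fun j _ => D.BB_ee (D.qM i) (sgn2 j)
    have : QFL.F k n q ^ a * QFL.K k n q ^ c * QFL.Kh k n q ^ d * QFL.E k n q ^ b =
        QFL.F k n q ^ a * (QFL.K k n q ^ c * (QFL.Kh k n q ^ d * (QFL.E k n q ^ b * 1))) := by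
      simp only [mul_assoc, mul_one]
    rw [this]
    exact Fl_mem (by omega) (stab_pow hK _ _ (stab_pow hH _ _ (stab_pow hE _ _ h1)))
  · refine Submodule.span_le.mpr ?_
    rintro x ⟨a, y, ha, hy, rfl⟩
    refine BB_ind (f := LinearMap.mulLeft k (QFL.F k n q ^ a)) ?_ hy
    intro b κ ε hb hκ hε
    rw [LinearMap.mulLeft_apply, D.epow]
    exact ee_pbw hn _ _ (by omega) (by omega) _ _ _

lemma one_sub_eq {A : Type} [Ring A] [Algebra k A] (c : A) : 1 - c = 1 + (-1 : k) • c := by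
  module

lemma eIdem_eq (hn : 0 < n) (h4 : 4 ∣ n) (i j : ℕ) (hj : j ≤ 1) :
    QFL.eIdem k n q i j = ee (n ^ 2 / 2) (gU k n q) (cU k n q) (q ^ (2 * i)) ((-1) ^ j) := by
  unfold QFL.eIdem ee
  congr 1
  · unfold QFL.phi
    congr 1
    · obtain ⟨m, rfl⟩ := h4
      rw [show (4 * m) ^ 2 / 2 = 8 * m ^ 2 by
        rw [show (4 * m) ^ 2 = 2 * (8 * m ^ 2) by ring, Nat.mul_div_cancel_left _ two_pos]]
      have : (m : k) ≠ 0 := by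
        have : m ≠ 0 := by omega
        exact_mod_cast this
      push_cast
      field_simp
      norm_num
    · refine Finset.sum_congr rfl fun t _ => ?_
      rw [pow_mul q⁻¹, inv_pow q (2 * i)]
      rfl
  · unfold QFL.oneJ
    rcases (show j = 0 ∨ j = 1 by omega) with rfl | rfl
    · rw [if_pos rfl, pow_zero, one_smul]; rfl
    · rw [if_neg one_ne_zero, pow_one]
      exact congrArg _ (one_sub_eq (A := QFL.U k n q) (cU k n q))

lemma Gm_U (hn : 0 < n) (h4 : 4 ∣ n) (hq : IsPrimitiveRoot q (n ^ 2)) (i j : ℕ) (hi : 1 ≤ i)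
    (hi2 : i ≤ n ^ 2 / 2) (hj : j ≤ 1) :
    Gm (n ^ 2) (n ^ 2 / 2) q (QFL.E k n q) (QFL.F k n q) (gU k n q) (cU k n q) i j
      (QFL.gam k n q i j) := by
  have D := Data_U (k := k) hn h4 hq
  have hN := D.hN
  have hex := D.exists_gam (r := 2 * i - 2) (by omega) (QFL.eIdem k n q i j)
  have hex' : ∃! x, x ∈ QFL.pbw k n q ∧ QFL.F k n q * x = QFL.beta k n q i j := by
    rw [pbw_eq hn h4 hq]; exact hex
  have hg : QFL.gam k n q i j = hex'.choose := by
    unfold QFL.gam; rw [dif_pos hex']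
  have hs := hex'.choose_spec.1
  rw [← hg] at hs
  refine ⟨?_, ?_⟩
  · rw [← pbw_eq hn h4 hq]; exact hs.1
  · rw [hs.2, ← eIdem_eq hn h4 i j hj]; rfl

end fin

end QFLaux
open QFL in
/-- Theorem 2.12: `u = ⨁_{j=0}^{1} ⨁_{i=1}^{n²/2} ⨁_{h=0}^{n²-2i} P_{2i,j}E^h`
as a left module over itself. -/
theorem statement8 (k : Type) [Field k] [IsAlgClosed k] [CharZero k]
    (n : ℕ) (hn : 0 < n) (h4 : 4 ∣ n) (q : k) (hq : IsPrimitiveRoot q (n ^ 2)) :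
    DirectSum.IsInternal
      (fun t : {t : ℕ × ℕ × ℕ //
          1 ≤ t.1 ∧ t.1 ≤ n ^ 2 / 2 ∧ t.2.1 ≤ 1 ∧ t.2.2 ≤ n ^ 2 - 2 * t.1} =>
        Submodule.map
          (LinearMap.toSpanSingleton (U k n q) (U k n q) (E k n q ^ t.1.2.2))
          (P k n q t.1.1 t.1.2.1)) := by
  exact (QFLaux.Data_U hn h4 hq).internal (fun i j => QFLaux.Gm_U hn h4 hq i j)
end
end
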